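/- arXiv:1803.03546 — 6 statements merged into one kernel-verified Lean document; each statement's English description precedes it below -/
import Mathlib

section
/- There exists a constant C > 0 such that for every positive integer n, |∫₀¹ {n x}·log x dx + 1/2 − (log n)/(12 n)| ≤ C/n. In other words, ∫₀¹ {n x} log x dx = −1/2 + (log n)/(12 n) + O(1/n) as n → ∞. -/
open MeasureTheory Real

/-!
Write `B(t) = {t} - 1/2`. It has mean zero on every period, so the substitution `t = n x` gives
`∫₀¹ {n x} log x dx = -1/2 + n⁻¹ ∫₀ⁿ B(t) log t dt`. On `[k, k + 1]` replace a concave function `f`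
by its chord: since `∫₀¹ (s - 1/2) s ds = 1/12`, the chord contributes exactly
`(f (k + 1) - f k) / 12`, and the distance from `f` to the chord is at most `f' k - f' (k + 1)`.
Both quantities telescope, so `∫₁ⁿ B(t) log t dt = (log n) / 12 + O(1)`.
-/

open Set intervalIntegral

/-- The sawtooth function `{t} - 1/2`, that is, the `1`-periodic extension of the first Bernoulli
polynomial from `[0, 1)`, which is the kernel of the first-order Euler–Maclaurin formula. -/
noncomputable def sawtooth (t : ℝ) : ℝ := Int.fract t - 1 / 2

lemma measurable_sawtooth : Measurable sawtooth := measurable_fract.sub_const _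

lemma sawtooth_periodic : Function.Periodic sawtooth 1 := fun t ↦ by
  simp only [sawtooth, Int.fract_add_one]

lemma abs_sub_half_le {s : ℝ} (hs : s ∈ Icc (0 : ℝ) 1) : |s - 1 / 2| ≤ 1 / 2 := by
  rw [abs_le]
  constructor <;> linarith [hs.1, hs.2]

lemma abs_sawtooth_le (t : ℝ) : |sawtooth t| ≤ 1 / 2 :=
  abs_sub_half_le ⟨Int.fract_nonneg t, (Int.fract_lt_one t).le⟩

lemma sawtooth_intCast_add (k : ℤ) {s : ℝ} (hs : s ∈ Ico (0 : ℝ) 1) :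
    sawtooth (k + s) = s - 1 / 2 := by
  rw [sawtooth, Int.fract_intCast_add, Int.fract_eq_self.mpr hs]

lemma intervalIntegrable_sawtooth_mul {f : ℝ → ℝ} {a b : ℝ}
    (hf : IntervalIntegrable f volume a b) :
    IntervalIntegrable (fun t ↦ sawtooth t * f t) volume a b :=
  have bounded (μ : Measure ℝ) : ∀ᵐ t ∂μ, ‖sawtooth t‖ ≤ 1 / 2 := .of_forall abs_sawtooth_le
  ⟨hf.1.bdd_mul measurable_sawtooth.aestronglyMeasurable (bounded _),
    hf.2.bdd_mul measurable_sawtooth.aestronglyMeasurable (bounded _)⟩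

lemma intervalIntegrable_sawtooth (a b : ℝ) : IntervalIntegrable sawtooth volume a b := by
  simpa only [mul_one] using intervalIntegrable_sawtooth_mul (f := fun _ ↦ 1) (by simp)

lemma integral_sawtooth_mul_unit (f : ℝ → ℝ) (k : ℤ) :
    ∫ t in (k : ℝ)..(k + 1), sawtooth t * f t = ∫ s in (0 : ℝ)..1, (s - 1 / 2) * f (k + s) := by
  calc ∫ t in (k : ℝ)..(k + 1), sawtooth t * f t
      = ∫ s in (0 : ℝ)..1, sawtooth (k + s) * f (k + s) := by
        rw [integral_comp_add_left (fun t ↦ sawtooth t * f t), add_zero]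
    _ = ∫ s in (0 : ℝ)..1, (s - 1 / 2) * f (k + s) :=
        integral_congr_Ioo_of_le zero_le_one fun s hs ↦ by
          simp only [sawtooth_intCast_add k (Ioo_subset_Ico_self hs)]

lemma integral_sawtooth_zero_intCast (n : ℤ) : ∫ t in (0 : ℝ)..n, sawtooth t = 0 := by
  have one_period : ∫ t in (0 : ℝ)..1, sawtooth t = 0 := by
    simpa using integral_sawtooth_mul_unit (fun _ ↦ 1) 0
  have periods := sawtooth_periodic.intervalIntegral_add_zsmul_eq n 0 intervalIntegrable_sawtooth
  simpa [one_period] using periods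

lemma integral_sub_half_mul_affine (A B : ℝ) :
    ∫ s in (0 : ℝ)..1, (s - 1 / 2) * (A + B * s) = B / 12 := by
  have expand (s : ℝ) : (s - 1 / 2) * (A + B * s) = B * s ^ 2 + (A - B / 2) * s - A / 2 := by ring
  simp_rw [expand]
  rw [intervalIntegral.integral_sub, intervalIntegral.integral_add,
    intervalIntegral.integral_const_mul, intervalIntegral.integral_const_mul]
  · norm_num
    ring
  all_goals exact Continuous.intervalIntegrable (by fun_prop) _ _

lemma abs_integral_sub_half_mul_sub_le {g : ℝ → ℝ} {A B ε : ℝ}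
    (hg : IntervalIntegrable g volume 0 1)
    (hε : ∀ s ∈ Ioc (0 : ℝ) 1, |g s - (A + B * s)| ≤ ε) :
    |(∫ s in (0 : ℝ)..1, (s - 1 / 2) * g s) - B / 12| ≤ ε / 2 := by
  have pointwise : ∀ s ∈ uIoc (0 : ℝ) 1,
      ‖(s - 1 / 2) * g s - (s - 1 / 2) * (A + B * s)‖ ≤ 1 / 2 * ε := fun s hs ↦ by
    rw [uIoc_of_le zero_le_one] at hs
    rw [← mul_sub, norm_mul]
    exact mul_le_mul (abs_sub_half_le (Ioc_subset_Icc_self hs)) (hε s hs) (norm_nonneg _)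
      (by norm_num)
  rw [← integral_sub_half_mul_affine A B, ← intervalIntegral.integral_sub
    (hg.continuousOn_mul (by fun_prop)) (Continuous.intervalIntegrable (by fun_prop) _ _)]
  calc _ ≤ 1 / 2 * ε * |1 - 0| := norm_integral_le_of_norm_le_const pointwise
    _ = ε / 2 := by norm_num; ring

lemma abs_sub_chord_le_of_concaveOn {f : ℝ → ℝ} {a b x f'a f'b : ℝ}
    (hf : ConcaveOn ℝ (Icc a b) f) (ha : HasDerivAt f f'a a) (hb : HasDerivAt f f'b b)
    (hx : x ∈ Ioc a b) :
    |f x - (f a + slope f a b * (x - a))| ≤ (f'a - f'b) * (x - a) := by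
  have hab : a < b := hx.1.trans_le hx.2
  have ha_mem : a ∈ Icc a b := left_mem_Icc.mpr hab.le
  have hb_mem : b ∈ Icc a b := right_mem_Icc.mpr hab.le
  have hx_mem : x ∈ Icc a b := Ioc_subset_Icc_self hx
  have chord_le : slope f a b ≤ slope f a x :=
    hf.slope_anti ha_mem ⟨hx_mem, hx.1.ne'⟩ ⟨hb_mem, hab.ne'⟩ hx.2
  have le_left : slope f a x ≤ f'a := hf.slope_le_of_hasDerivAt ha_mem hx_mem hx.1 ha
  have right_le : f'b ≤ slope f a b := hf.le_slope_of_hasDerivAt ha_mem hb_mem hab hb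
  have deviation : f x - (f a + slope f a b * (x - a)) =
      (slope f a x - slope f a b) * (x - a) := by
    have slope_mul : (x - a) * slope f a x = f x - f a := sub_smul_slope f a x
    linarith
  have hxa : 0 ≤ x - a := (sub_pos.mpr hx.1).le
  rw [deviation, abs_of_nonneg (mul_nonneg (sub_nonneg.mpr chord_le) hxa)]
  gcongr

lemma abs_integral_sawtooth_mul_unit_sub_le {f : ℝ → ℝ} {k : ℤ} {f'₀ f'₁ : ℝ}
    (hf : ConcaveOn ℝ (Icc (k : ℝ) (k + 1)) f) (hfi : IntervalIntegrable f volume k (k + 1))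
    (h₀ : HasDerivAt f f'₀ k) (h₁ : HasDerivAt f f'₁ (k + 1)) :
    |(∫ t in (k : ℝ)..(k + 1), sawtooth t * f t) - (f (k + 1) - f k) / 12| ≤ (f'₀ - f'₁) / 2 := by
  rw [integral_sawtooth_mul_unit]
  refine abs_integral_sub_half_mul_sub_le (A := f k) ?_ fun s hs ↦ ?_
  · simpa using hfi.comp_add_left k
  have hks : (k + s : ℝ) ∈ Ioc (k : ℝ) (k + 1) := ⟨by linarith [hs.1], by linarith [hs.2]⟩
  have chord := abs_sub_chord_le_of_concaveOn hf h₀ h₁ hks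
  rw [slope_def_field, add_sub_cancel_left, add_sub_cancel_left, div_one] at chord
  have deriv_anti : 0 ≤ f'₀ - f'₁ := nonneg_of_mul_nonneg_left ((abs_nonneg _).trans chord) hs.1
  exact chord.trans (mul_le_of_le_one_right deriv_anti hs.2)

theorem abs_integral_sawtooth_mul_sub_le_of_concaveOn {f f' : ℝ → ℝ} {m n : ℤ} (hmn : m ≤ n)
    (hf : ConcaveOn ℝ (Icc (m : ℝ) n) f) (hf' : ∀ x ∈ Icc (m : ℝ) n, HasDerivAt f (f' x) x) :
    |(∫ t in (m : ℝ)..n, sawtooth t * f t) - (f n - f m) / 12| ≤ (f' m - f' n) / 2 := by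
  induction n, hmn using Int.leInduction with
  | base => simp
  | succ n hmn ih =>
    push_cast at hf hf' ⊢
    have hmn' : (m : ℝ) ≤ n := mod_cast hmn
    have hn : (n : ℝ) ≤ n + 1 := by linarith
    have initial : Icc (m : ℝ) n ⊆ Icc (m : ℝ) (n + 1) := Icc_subset_Icc_right hn
    have last : Icc (n : ℝ) (n + 1) ⊆ Icc (m : ℝ) (n + 1) := Icc_subset_Icc_left hmn'
    have integrable {a b : ℝ} (hab : a ≤ b) (h : Icc a b ⊆ Icc (m : ℝ) (n + 1)) :
        IntervalIntegrable f volume a b :=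
      ContinuousOn.intervalIntegrable_of_Icc hab fun x hx ↦
        (hf' x (h hx)).continuousAt.continuousWithinAt
    have bound_initial := ih (hf.subset initial (convex_Icc _ _)) fun x hx ↦ hf' x (initial hx)
    have bound_last := abs_integral_sawtooth_mul_unit_sub_le (hf.subset last (convex_Icc _ _))
      (integrable hn last) (hf' n (last (left_mem_Icc.mpr hn)))
      (hf' (n + 1) (last (right_mem_Icc.mpr hn)))
    rw [← integral_add_adjacent_intervals
      (intervalIntegrable_sawtooth_mul (integrable hmn' initial))
      (intervalIntegrable_sawtooth_mul (integrable hn last))]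
    rw [abs_le] at bound_initial bound_last ⊢
    constructor <;> linarith [bound_initial.1, bound_initial.2, bound_last.1, bound_last.2]

lemma abs_integral_sawtooth_mul_log_sub_le {n : ℕ} (hn : 0 < n) :
    |(∫ t in (1 : ℝ)..n, sawtooth t * log t) - log n / 12| ≤ 1 / 2 := by
  have pos_of_mem {x : ℝ} (hx : x ∈ Icc ((1 : ℤ) : ℝ) (n : ℤ)) : 0 < x :=
    zero_lt_one.trans_le (by simpa using hx.1)
  have euler_maclaurin := abs_integral_sawtooth_mul_sub_le_of_concaveOn
    (m := 1) (n := n) (mod_cast hn)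
    (strictConcaveOn_log_Ioi.concaveOn.subset (fun _ ↦ pos_of_mem) (convex_Icc _ _))
    (fun x hx ↦ hasDerivAt_log (pos_of_mem hx).ne')
  simp only [Int.cast_one, Int.cast_natCast, log_one, sub_zero, inv_one] at euler_maclaurin
  have : 0 ≤ (n : ℝ)⁻¹ := by positivity
  linarith

lemma integral_fract_mul_log_div (n : ℕ) :
    ∫ t in (0 : ℝ)..n, Int.fract t * log (t / n) =
      (∫ t in (0 : ℝ)..n, sawtooth t * log t) - n / 2 := by
  have mean_zero : ∫ t in (0 : ℝ)..n, sawtooth t = 0 := by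
    simpa using integral_sawtooth_zero_intCast n
  have const_log_n : IntervalIntegrable (fun _ ↦ log n) volume 0 n := intervalIntegrable_const
  have integral_log_sub : ∫ t in (0 : ℝ)..n, (log t - log n) = -n := by
    rw [intervalIntegral.integral_sub intervalIntegrable_log' const_log_n, integral_log,
      intervalIntegral.integral_const, smul_eq_mul]
    ring
  have sawtooth_log : IntervalIntegrable (fun t ↦ sawtooth t * log t) volume 0 n :=
    intervalIntegrable_sawtooth_mul intervalIntegrable_log'
  have log_n_sawtooth : IntervalIntegrable (fun t ↦ log n * sawtooth t) volume 0 n :=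
    (intervalIntegrable_sawtooth 0 n).const_mul _
  calc ∫ t in (0 : ℝ)..n, Int.fract t * log (t / n)
      = ∫ t in (0 : ℝ)..n,
          (sawtooth t * log t - log n * sawtooth t + 1 / 2 * (log t - log n)) :=
        integral_congr_Ioo_of_le n.cast_nonneg fun t ht ↦ by
          simp only [sawtooth, log_div ht.1.ne' (ht.1.trans ht.2).ne']
          ring
    _ = (∫ t in (0 : ℝ)..n, sawtooth t * log t) - n / 2 := by
        rw [intervalIntegral.integral_add (sawtooth_log.sub log_n_sawtooth)
            ((intervalIntegrable_log'.sub const_log_n).const_mul _),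
          intervalIntegral.integral_sub sawtooth_log log_n_sawtooth,
          intervalIntegral.integral_const_mul, mean_zero,
          intervalIntegral.integral_const_mul, integral_log_sub]
        ring

lemma integral_fract_mul_log_eq {n : ℕ} (hn : 0 < n) :
    ∫ x in (0 : ℝ)..1, Int.fract (n * x) * log x =
      -1 / 2 + (n : ℝ)⁻¹ * ∫ t in (0 : ℝ)..n, sawtooth t * log t := by
  have hn' : (n : ℝ) ≠ 0 := mod_cast hn.ne'
  calc ∫ x in (0 : ℝ)..1, Int.fract (n * x) * log x
      = ∫ x in (0 : ℝ)..1, Int.fract (n * x) * log (n * x / n) := by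
        simp only [mul_div_cancel_left₀ _ hn']
    _ = (n : ℝ)⁻¹ * ∫ t in (0 : ℝ)..n, Int.fract t * log (t / n) := by
        rw [integral_comp_mul_left (fun t ↦ Int.fract t * log (t / n)) hn', mul_zero, mul_one,
          smul_eq_mul]
    _ = -1 / 2 + (n : ℝ)⁻¹ * ∫ t in (0 : ℝ)..n, sawtooth t * log t := by
        rw [integral_fract_mul_log_div n]
        field_simp
        ring

/-- `∫₀¹ {n x} log x dx = -1/2 + (log n)/(12 n) + O(1/n)` uniformly in `n`. -/
theorem integral_fract_mul_log_asymp :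
    ∃ C > (0 : ℝ), ∀ n : ℕ, 0 < n →
      |(∫ x in Set.Ioc (0 : ℝ) 1, Int.fract (n * x) * Real.log x)
        + 1 / 2 - Real.log n / (12 * n)| ≤ C / n := by
  set J₀ := ∫ t in (0 : ℝ)..1, sawtooth t * log t
  refine ⟨|J₀| + 1 / 2, by positivity, fun n hn ↦ ?_⟩
  set J := ∫ t in (1 : ℝ)..n, sawtooth t * log t
  have hn' : (0 : ℝ) < n := mod_cast hn
  have error : (∫ x in Ioc (0 : ℝ) 1, Int.fract (n * x) * log x) + 1 / 2 - log n / (12 * n) =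
      (J₀ + (J - log n / 12)) / n := by
    rw [← integral_of_le zero_le_one, integral_fract_mul_log_eq hn,
      ← integral_add_adjacent_intervals (b := 1)
        (intervalIntegrable_sawtooth_mul intervalIntegrable_log')
        (intervalIntegrable_sawtooth_mul intervalIntegrable_log')]
    field_simp
    ring
  rw [error, abs_div, abs_of_pos hn']
  gcongr
  exact (abs_add_le _ _).trans (add_le_add_right (abs_integral_sawtooth_mul_log_sub_le hn) _)
end

section
/- Fix a positive integer ℓ and set a(ℓ) := ℓ/2 + 2·Σ_{m=1}^{ℓ−1} (m/ℓ)·log(m/ℓ). Then there exists a constant C > 0 such that for all integers n ≥ 2: |Σ_{k=1}^{n−1} (2{ℓ k/n} − 1)·log(k/n) − a(ℓ)·n + (1/2)·log n| ≤ C and |Σ_{k=1}^{n−1} (2{−ℓ k/n} − 1)·log(k/n) + a(ℓ)·n − (1/2)·log n| ≤ C. -/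
open Real Finset

/-! For `0 ≤ x < ℓ` the fractional part is `{x} = x - ∑_{0 < m < ℓ} 1[m ≤ x]`. Inserting `x = ℓk/n`
turns the sum into a combination of `∑ (k/n) log (k/n)`, `∑ log (k/n)` and the tails
`∑_{k ≥ nm/ℓ} log (k/n)`. The first and third kinds are Riemann sums of bounded functions that are
monotone or differences of monotone functions, hence equal `n` times an integral up to `O(1)`; the
second is `log (n!) - n log n`, and Stirling's formula produces the term `(log n)/2`.
Since `{x} + {-x} = 1` off the integers, the reflected sum is minus the original one up to at most
one term `log (m/ℓ)` for each `m`.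
-/

open Asymptotics Filter
open scoped Nat

section RiemannSum

variable {f : ℝ → ℝ}

lemma abs_sum_Ico_ceil_sub_integral_le {a : ℝ} {b : ℕ} (ha : 0 ≤ a) (hab : a ≤ b)
    (hf : MonotoneOn f (Set.Icc a b)) :
    |∑ k ∈ Ico ⌈a⌉₊ b, f k - ∫ t in a..b, f t| ≤ |f a| + |f b| := by
  set N := ⌈a⌉₊
  have haN : a ≤ N := Nat.le_ceil a
  have hNb : N ≤ b := Nat.ceil_le.2 hab
  have hNb' : (N : ℝ) ≤ b := mod_cast hNb
  have hNa : N - a ≤ 1 := by linarith [Nat.ceil_lt_add_one ha]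
  have hf_left : MonotoneOn f (Set.Icc a N) := hf.mono (Set.Icc_subset_Icc_right hNb')
  have hf_right : MonotoneOn f (Set.Icc N b) := hf.mono (Set.Icc_subset_Icc_left haN)
  have hi_left : IntervalIntegrable f MeasureTheory.volume a N :=
    MonotoneOn.intervalIntegrable (by rwa [Set.uIcc_of_le haN])
  have hi_right : IntervalIntegrable f MeasureTheory.volume N b :=
    MonotoneOn.intervalIntegrable (by rwa [Set.uIcc_of_le hNb'])
  have left_ge : (N - a) * f a ≤ ∫ t in a..N, f t := by
    simpa using intervalIntegral.integral_mono_on haN intervalIntegrable_const hi_left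
      fun t ht ↦ hf_left (Set.left_mem_Icc.2 haN) ht ht.1
  have left_le : ∫ t in a..N, f t ≤ (N - a) * f N := by
    simpa using intervalIntegral.integral_mono_on haN hi_left intervalIntegrable_const
      fun t ht ↦ hf_left ht (Set.right_mem_Icc.2 haN) ht.2
  have right_ge : ∑ k ∈ Ico N b, f k ≤ ∫ t in N..b, f t := hf_right.sum_le_integral_Ico hNb
  have right_le : ∫ t in N..b, f t ≤ ∑ k ∈ Ico N b, f k + (f b - f N) := by
    have htel := sum_Ico_sub (fun k : ℕ ↦ f k) hNb
    rw [sum_sub_distrib] at htel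
    linarith [hf_right.integral_le_sum_Ico hNb]
  have hfaN : f a ≤ f N := hf_left (Set.left_mem_Icc.2 haN) (Set.right_mem_Icc.2 haN) haN
  have left_abs : |(N - a) * f a| ≤ |f a| := by
    rw [abs_mul, abs_of_nonneg (sub_nonneg.2 haN)]
    exact mul_le_of_le_one_left (abs_nonneg _) hNa
  have right_abs : |(1 - (N - a)) * f a| ≤ |f a| := by
    rw [abs_mul, abs_of_nonneg (sub_nonneg.2 hNa)]
    exact mul_le_of_le_one_left (abs_nonneg _) (by linarith)
  have convex_le : (1 - (N - a)) * f a ≤ (1 - (N - a)) * f N :=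
    mul_le_mul_of_nonneg_left hfaN (sub_nonneg.2 hNa)
  rw [← intervalIntegral.integral_add_adjacent_intervals hi_left hi_right, abs_le]
  constructor
  · linarith [neg_abs_le ((1 - (N - a)) * f a), le_abs_self (f b)]
  · linarith [neg_abs_le ((N - a) * f a), abs_nonneg (f b)]

theorem isBigO_sum_Ico_ceil_sub_integral {x : ℝ} (hx₀ : 0 ≤ x) (hx₁ : x ≤ 1)
    (hf : MonotoneOn f (Set.Icc x 1)) :
    (fun n : ℕ ↦ ∑ k ∈ Ico ⌈n * x⌉₊ n, f (k / n) - n * ∫ t in x..1, f t)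
      =O[atTop] fun _ ↦ (1 : ℝ) := by
  refine .of_bound (|f x| + |f 1|) ?_
  filter_upwards [eventually_ne_atTop 0] with n hn
  have hn₀ : (0 : ℝ) < n := by positivity
  have hmono : MonotoneOn (fun t ↦ f (t / n)) (Set.Icc (n * x) n) := by
    refine hf.comp (fun s _ t _ hst ↦ by gcongr) fun t ht ↦ ?_
    rwa [Set.mem_Icc, le_div_iff₀' hn₀, div_le_one hn₀]
  simpa [hn₀.ne'] using
    abs_sum_Ico_ceil_sub_integral_le (by positivity) (mul_le_of_le_one_right hn₀.le hx₁) hmono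

end RiemannSum

section LogSums

lemma isBigO_sum_Ico_ceil_log_div {x : ℝ} (hx₀ : 0 < x) (hx₁ : x ≤ 1) :
    (fun n : ℕ ↦ ∑ k ∈ Ico ⌈n * x⌉₊ n, log (k / n) - n * (x - 1 - x * log x))
      =O[atTop] fun _ ↦ (1 : ℝ) := by
  have hmono : MonotoneOn log (Set.Icc x 1) :=
    strictMonoOn_log.monotoneOn.mono fun t ht ↦ hx₀.trans_le ht.1
  refine (isBigO_sum_Ico_ceil_sub_integral hx₀.le hx₁ hmono).congr_left fun n ↦ ?_
  rw [integral_log, log_one]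
  ring

lemma antitoneOn_klFun : AntitoneOn InformationTheory.klFun (Set.Icc 0 1) := by
  refine antitoneOn_of_deriv_nonpos (convex_Icc 0 1)
    InformationTheory.continuous_klFun.continuousOn (fun t ht ↦ ?_) fun t ht ↦ ?_ <;>
    rw [interior_Icc] at ht
  · exact (InformationTheory.hasDerivAt_klFun ht.1.ne').differentiableAt.differentiableWithinAt
  · simpa using log_nonpos ht.1.le ht.2.le

lemma integral_klFun_zero_one : ∫ t in (0 : ℝ)..1, InformationTheory.klFun t = 1 / 4 := by
  have hderiv (t : ℝ) (ht : t ∈ Set.Ioo (0 : ℝ) 1) :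
      HasDerivAt (fun t ↦ t * (t * log t) / 2 + t - 3 * t ^ 2 / 4)
        (InformationTheory.klFun t) t := by
    convert! ((((hasDerivAt_id t).mul (hasDerivAt_mul_log ht.1.ne')).div_const 2).add
      (hasDerivAt_id t)).sub (((hasDerivAt_pow 2 t).const_mul 3).div_const 4) using 1
    simp only [InformationTheory.klFun, id_eq]
    ring
  rw [intervalIntegral.integral_eq_sub_of_hasDerivAt_of_le zero_le_one
    (by have := continuous_mul_log; fun_prop) hderiv
    (InformationTheory.continuous_klFun.intervalIntegrable 0 1)]
  norm_num

-- `t log t` is not monotone on `[0, 1]`, but `t log t = t - (1 - klFun t)` is a difference of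
-- monotone functions.
lemma isBigO_sum_div_mul_log_div :
    (fun n : ℕ ↦ ∑ k ∈ Ico 1 n, (k / n : ℝ) * log (k / n) + n / 4)
      =O[atTop] fun _ ↦ (1 : ℝ) := by
  have hkl := isBigO_sum_Ico_ceil_sub_integral le_rfl zero_le_one antitoneOn_klFun.neg
  have hid := isBigO_sum_Ico_ceil_sub_integral le_rfl zero_le_one
    (monotone_id.monotoneOn (Set.Icc (0 : ℝ) 1))
  refine (hid.sub hkl).congr' ?_ .rfl
  filter_upwards [eventually_gt_atTop 0] with n hn
  have hsum : ∑ k ∈ Ico 1 n, (k / n : ℝ) * log (k / n) =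
      ∑ k ∈ Ico 0 n, ((k / n : ℝ) + InformationTheory.klFun (k / n) - 1) := by
    rw [sum_eq_sum_Ico_succ_bot hn]
    simp [InformationTheory.klFun]
  simp only [mul_zero, Nat.ceil_zero, id_eq, sum_neg_distrib,
    intervalIntegral.integral_neg, integral_klFun_zero_one, integral_id, hsum, sum_sub_distrib,
    sum_add_distrib, sum_const, Nat.card_Ico, nsmul_eq_mul, Nat.sub_zero]
  ring

lemma sum_Ico_log_div (n : ℕ) : ∑ k ∈ Ico 1 n, log ((k : ℝ) / n) = log n ! - n * log n := by
  rcases n.eq_zero_or_pos with rfl | hn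
  · simp
  have hn₀ : (n : ℝ) ≠ 0 := mod_cast hn.ne'
  calc ∑ k ∈ Ico 1 n, log ((k : ℝ) / n)
      = ∑ k ∈ Ico 1 (n + 1), log ((k : ℝ) / n) := by
        rw [sum_Ico_succ_top hn, div_self hn₀, log_one, add_zero]
    _ = ∑ k ∈ Ico 1 (n + 1), (log k - log n) :=
        sum_congr rfl fun k hk ↦ log_div (mod_cast (Nat.one_le_iff_ne_zero.1 (mem_Ico.1 hk).1)) hn₀
    _ = log (∏ k ∈ Ico 1 (n + 1), (k : ℝ)) - n * log n := by
        rw [log_prod fun k hk ↦ mod_cast (Nat.one_le_iff_ne_zero.1 (mem_Ico.1 hk).1)]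
        simp
    _ = log n ! - n * log n := by rw [← Nat.cast_prod, prod_Ico_id_eq_factorial]

lemma isBigO_sum_log_div :
    (fun n : ℕ ↦ ∑ k ∈ Ico 1 n, log ((k : ℝ) / n) + n - 1 / 2 * log n)
      =O[atTop] fun _ ↦ (1 : ℝ) := by
  have hstirling := (Stirling.tendsto_stirlingSeq_sqrt_pi.log (by positivity)).isBigO_one ℝ
  refine (hstirling.add (isBigO_const_const (log 2 / 2) one_ne_zero _)).congr' ?_ .rfl
  filter_upwards [eventually_ne_atTop 0] with n hn
  have hn₀ : (n : ℝ) ≠ 0 := mod_cast hn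
  rw [Stirling.log_stirlingSeq_formula, sum_Ico_log_div, log_mul two_ne_zero hn₀,
    log_div hn₀ (exp_ne_zero 1), log_exp]
  ring

end LogSums

section FractionalPart

section FloorRing

variable {R : Type*} [Ring R] [LinearOrder R] [FloorRing R] {x : R} {ℓ : ℕ}

lemma fract_eq_sub_sum_ite (hx₀ : 0 ≤ x) (hx : x < ℓ) :
    Int.fract x = x - ∑ m ∈ Ico 1 ℓ, if (m : R) ≤ x then 1 else 0 := by
  have hfloor : ⌊x⌋₊ < ℓ := (Nat.floor_lt hx₀).2 hx
  have hfilter : (Ico 1 ℓ).filter (fun m : ℕ ↦ (m : R) ≤ x) = Ico 1 (⌊x⌋₊ + 1) := by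
    ext m
    rw [mem_filter, ← Nat.le_floor_iff hx₀]
    simp only [mem_Ico]
    lia
  rw [sum_boole, hfilter, Nat.card_Ico, Nat.add_sub_cancel, natCast_floor_eq_intCast_floor hx₀,
    Int.self_sub_floor]

lemma fract_add_fract_neg [IsStrictOrderedRing R] (hx₀ : 0 < x) (hx : x < ℓ) :
    Int.fract x + Int.fract (-x) = 1 - ∑ m ∈ Ico 1 ℓ, if x = m then 1 else 0 := by
  by_cases hint : Int.fract x = 0
  · obtain ⟨z, rfl⟩ := Int.fract_eq_zero_iff.1 hint
    lift z to ℕ using mod_cast hx₀.le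
    rw [Int.cast_natCast, Nat.cast_pos] at hx₀
    rw [Int.cast_natCast, Nat.cast_lt] at hx
    have hz : z ∈ Ico 1 ℓ := mem_Ico.2 ⟨hx₀, hx⟩
    simp [hz, -Int.cast_neg]
  · have hne (m : ℕ) : x ≠ m := by rintro rfl; exact hint (Int.fract_natCast m)
    simp [Int.fract_neg hint, hne]

end FloorRing

variable {ℓ n : ℕ}

lemma mul_div_mem_Ioo {k : ℕ} (hℓ : 0 < ℓ) (hk : k ∈ Ico 1 n) :
    (ℓ : ℝ) * k / n ∈ Set.Ioo (0 : ℝ) ℓ := by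
  obtain ⟨hk₁, hkn⟩ := mem_Ico.1 hk
  have hn₀ : (0 : ℝ) < n := by norm_cast; lia
  refine ⟨by positivity, ?_⟩
  rw [div_lt_iff₀ hn₀]
  gcongr

lemma Ico_ceil_eq_filter {m : ℕ} (hℓ : 0 < ℓ) (hm : 0 < m) :
    Ico ⌈(n : ℝ) * (m / ℓ)⌉₊ n = (Ico 1 n).filter fun k : ℕ ↦ (m : ℝ) ≤ ℓ * k / n := by
  ext k
  rw [mem_filter, mem_Ico, mem_Ico, Nat.ceil_le]
  by_cases hkn : k < n
  · have hn₀ : (0 : ℝ) < n := by norm_cast; lia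
    have hiff : (n : ℝ) * (m / ℓ) ≤ k ↔ (m : ℝ) ≤ ℓ * k / n := by
      rw [le_div_iff₀ hn₀, ← mul_div_assoc, div_le_iff₀ (by positivity), mul_comm (n : ℝ),
        mul_comm (k : ℝ)]
    have hk₁ (hmk : (m : ℝ) ≤ ℓ * k / n) : 1 ≤ k := by
      rw [Nat.one_le_iff_ne_zero]
      rintro rfl
      rw [Nat.cast_zero, mul_zero, zero_div] at hmk
      exact hm.not_ge (mod_cast hmk)
    tauto
  · tauto

lemma sum_fract_mul (hℓ : 0 < ℓ) (n : ℕ) (f : ℝ → ℝ) :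
    ∑ k ∈ Ico 1 n, Int.fract ((ℓ : ℝ) * k / n) * f (k / n) =
      ℓ * ∑ k ∈ Ico 1 n, (k / n : ℝ) * f (k / n) -
        ∑ m ∈ Ico 1 ℓ, ∑ k ∈ Ico ⌈(n : ℝ) * (m / ℓ)⌉₊ n, f (k / n) := by
  have htail (m : ℕ) (hm : m ∈ Ico 1 ℓ) : ∑ k ∈ Ico ⌈(n : ℝ) * (m / ℓ)⌉₊ n, f (k / n) =
      ∑ k ∈ Ico 1 n, if (m : ℝ) ≤ ℓ * k / n then f (k / n) else 0 := by
    rw [← sum_filter, Ico_ceil_eq_filter hℓ (mem_Ico.1 hm).1]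
  rw [sum_congr rfl htail, sum_comm, mul_sum, ← sum_sub_distrib]
  refine sum_congr rfl fun k hk ↦ ?_
  have hmem := mul_div_mem_Ioo hℓ hk
  rw [fract_eq_sub_sum_ite hmem.1.le hmem.2, sub_mul, sum_mul]
  simp only [ite_mul, one_mul, zero_mul]
  ring

lemma abs_sum_ite_div_eq_le (hn : n ≠ 0) (s : Finset ℕ) (f : ℝ → ℝ) (x : ℝ) :
    |∑ k ∈ s, if (k : ℝ) / n = x then f (k / n) else 0| ≤ |f x| := by
  have hcard : #(s.filter fun k : ℕ ↦ (k : ℝ) / n = x) ≤ 1 := by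
    refine card_le_one.2 fun i hi j hj ↦ ?_
    have hij := (mem_filter.1 hi).2.trans (mem_filter.1 hj).2.symm
    exact_mod_cast (div_left_inj' (mod_cast hn)).1 hij
  rw [← sum_filter, sum_congr rfl fun k hk ↦ congrArg f (mem_filter.1 hk).2, sum_const,
    nsmul_eq_mul, abs_mul, Nat.abs_cast]
  exact mul_le_of_le_one_left (abs_nonneg _) (mod_cast hcard)

lemma abs_sum_fract_add_fract_neg_sub_one_mul_le (hℓ : 0 < ℓ) (hn : n ≠ 0) (f : ℝ → ℝ) :
    |∑ k ∈ Ico 1 n,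
        (Int.fract ((ℓ : ℝ) * k / n) + Int.fract (-((ℓ : ℝ) * k / n)) - 1) * f (k / n)| ≤
      ∑ m ∈ Ico 1 ℓ, |f (m / ℓ)| := by
  have hterm (k : ℕ) (hk : k ∈ Ico 1 n) :
      (Int.fract ((ℓ : ℝ) * k / n) + Int.fract (-((ℓ : ℝ) * k / n)) - 1) * f (k / n) =
        -∑ m ∈ Ico 1 ℓ, if (k : ℝ) / n = m / ℓ then f (k / n) else 0 := by
    have hmem := mul_div_mem_Ioo hℓ hk
    have hiff (m : ℕ) : (ℓ : ℝ) * k / n = m ↔ (k : ℝ) / n = m / ℓ := by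
      rw [mul_div_assoc, eq_div_iff_mul_eq (by positivity), mul_comm]
    rw [fract_add_fract_neg hmem.1 hmem.2, sub_sub_cancel_left, neg_mul, sum_mul]
    simp only [ite_mul, one_mul, zero_mul, hiff]
  rw [sum_congr rfl hterm, sum_neg_distrib, abs_neg, sum_comm]
  exact (abs_sum_le_sum_abs _ _).trans (sum_le_sum fun m _ ↦ abs_sum_ite_div_eq_le hn _ f _)

end FractionalPart

section FractLogSums

variable {ℓ : ℕ}

/-- The constant `a(ℓ)`, i.e. the integral `∫₀¹ (2{ℓx} - 1) log x dx`. -/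
noncomputable def fractLogMean (ℓ : ℕ) : ℝ :=
  ℓ / 2 + 2 * ∑ m ∈ Ico 1 ℓ, (m : ℝ) / ℓ * log ((m : ℝ) / ℓ)

lemma fractLogMean_eq (hℓ : 0 < ℓ) :
    fractLogMean ℓ =
      1 - ℓ / 2 - 2 * ∑ m ∈ Ico 1 ℓ, ((m : ℝ) / ℓ - 1 - (m : ℝ) / ℓ * log ((m : ℝ) / ℓ)) := by
  have hℓ₀ : (ℓ : ℝ) ≠ 0 := mod_cast hℓ.ne'
  have hsum : ∑ m ∈ Ico 1 ℓ, (m : ℝ) / ℓ = (ℓ - 1) / 2 := by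
    have hgauss : (∑ m ∈ range ℓ, (m : ℝ)) * 2 = ℓ * (ℓ - 1) := by
      simpa [Nat.cast_pred hℓ] using congrArg (Nat.cast (R := ℝ)) (sum_range_id_mul_two ℓ)
    rw [sum_range_eq_add_Ico _ hℓ, Nat.cast_zero, zero_add] at hgauss
    rw [← sum_div, div_eq_div_iff hℓ₀ two_ne_zero, hgauss, mul_comm]
  simp only [fractLogMean, sum_sub_distrib, hsum, sum_const, Nat.card_Ico, nsmul_eq_mul, mul_one,
    Nat.cast_pred hℓ]
  ring

theorem isBigO_sum_fract_mul_log (hℓ : 0 < ℓ) :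
    (fun n : ℕ ↦ ∑ k ∈ Ico 1 n, (2 * Int.fract ((ℓ : ℝ) * k / n) - 1) * log (k / n)
        - fractLogMean ℓ * n + 1 / 2 * log n) =O[atTop] fun _ ↦ (1 : ℝ) := by
  have htails : (fun n : ℕ ↦ ∑ m ∈ Ico 1 ℓ, (∑ k ∈ Ico ⌈(n : ℝ) * (m / ℓ)⌉₊ n, log (k / n)
      - n * ((m : ℝ) / ℓ - 1 - (m : ℝ) / ℓ * log (m / ℓ)))) =O[atTop] fun _ ↦ (1 : ℝ) := by
    refine .fun_sum fun m hm ↦ ?_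
    obtain ⟨hm₁, hmℓ⟩ := mem_Ico.1 hm
    exact isBigO_sum_Ico_ceil_log_div (by positivity)
      (div_le_one_of_le₀ (by gcongr) (by positivity))
  refine (((isBigO_sum_div_mul_log_div.const_mul_left (2 * ℓ)).sub isBigO_sum_log_div).sub
    (htails.const_mul_left 2)).congr_left fun n ↦ ?_
  simp only [sub_mul, mul_assoc, one_mul, sum_sub_distrib, ← mul_sum, sum_fract_mul hℓ n log,
    fractLogMean_eq hℓ]
  ring

theorem isBigO_sum_fract_neg_mul_log (hℓ : 0 < ℓ) :
    (fun n : ℕ ↦ ∑ k ∈ Ico 1 n, (2 * Int.fract (-((ℓ : ℝ) * k / n)) - 1) * log (k / n)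
        + fractLogMean ℓ * n - 1 / 2 * log n) =O[atTop] fun _ ↦ (1 : ℝ) := by
  have hreflect : (fun n : ℕ ↦ ∑ k ∈ Ico 1 n,
      (Int.fract ((ℓ : ℝ) * k / n) + Int.fract (-((ℓ : ℝ) * k / n)) - 1) * log (k / n))
        =O[atTop] fun _ ↦ (1 : ℝ) := by
    refine .of_bound (∑ m ∈ Ico 1 ℓ, |log (m / ℓ)|) ?_
    filter_upwards [eventually_ne_atTop 0] with n hn
    simpa using abs_sum_fract_add_fract_neg_sub_one_mul_le hℓ hn log
  refine ((hreflect.const_mul_left 2).sub (isBigO_sum_fract_mul_log hℓ)).congr_left fun n ↦ ?_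
  simp only [sub_mul, add_mul, mul_assoc, one_mul, sum_sub_distrib, sum_add_distrib, ← mul_sum]
  ring

end FractLogSums

/-- Asymptotics of `Σ_{k=1}^{n-1} (2{±ℓk/n} - 1) log(k/n)` for a fixed positive
integer `ℓ`, with `a(ℓ) = ℓ/2 + 2 Σ_{m=1}^{ℓ-1} (m/ℓ) log(m/ℓ)`. -/
theorem sum_fract_log_asymp (ℓ : ℕ) (hℓ : 0 < ℓ) :
    ∃ C > (0 : ℝ), ∀ n : ℕ, 2 ≤ n →
      |(∑ k ∈ Finset.Ico 1 n, (2 * Int.fract ((ℓ : ℝ) * k / n) - 1) * Real.log (k / n))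
          - ((ℓ : ℝ) / 2 + 2 * ∑ m ∈ Finset.Ico 1 ℓ, (m : ℝ) / ℓ * Real.log ((m : ℝ) / ℓ)) * n
          + 1 / 2 * Real.log n| ≤ C ∧
      |(∑ k ∈ Finset.Ico 1 n, (2 * Int.fract (-((ℓ : ℝ) * k / n)) - 1) * Real.log (k / n))
          + ((ℓ : ℝ) / 2 + 2 * ∑ m ∈ Finset.Ico 1 ℓ, (m : ℝ) / ℓ * Real.log ((m : ℝ) / ℓ)) * n
          - 1 / 2 * Real.log n| ≤ C := by
  obtain ⟨C₁, hC₁, hpos⟩ := bound_of_isBigO_nat_atTop (isBigO_sum_fract_mul_log hℓ)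
  obtain ⟨C₂, -, hneg⟩ := bound_of_isBigO_nat_atTop (isBigO_sum_fract_neg_mul_log hℓ)
  refine ⟨max C₁ C₂, lt_max_of_lt_left hC₁, fun n _ ↦ ⟨?_, ?_⟩⟩
  · exact le_max_of_le_left (by simpa [fractLogMean] using hpos (x := n) one_ne_zero)
  · exact le_max_of_le_right (by simpa [fractLogMean] using hneg (x := n) one_ne_zero)
end

section
/- Let p and q be positive integers and let d := gcd(p, q). Then ∫₀¹ ({p x} − {q x})²/x dx = −2(p − q)·∫₀¹ ({p x} − {q x})·log x dx − Σ_{k=1}^{p−1} (2{q k/p} − 1)·log(k/p) − Σ_{j=1}^{q−1} (2{p j/q} − 1)·log(j/q) − 2·Σ_{m=1}^{d−1} log(m/d). -/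
open MeasureTheory Real Finset

/-!
On an interval where `f = {px} - {qx}` is affine, its slope is `p - q`, so `f² log x` has derivative
`2 (p - q) f log x + f² / x` there. Hence `∫ f² / x + 2 (p - q) ∫ f log x` over `(0, 1]` is minus
the sum, over the points `i / (pq)` with `0 < i < pq`, of the jump of `f²` times `log (i / (pq))`.
With `a` and `b` the values of `{px}` and `{qx}` at such a point, `f` drops by 1 where `a = 0` and
rises by 1 where `b = 0`. These are the points `k / p` and `j / q`, and the cross term of the two
jumps at the common points `m / gcd(p, q)` gives the last sum.
-/

section FloorRing

/-- The left limit of `Int.fract` at `x`, which is `1` instead of `0` at the integers. It is used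
for the values of a sawtooth function just before a jump. -/
def leftFract {R : Type*} [Ring R] [LinearOrder R] [FloorRing R] (x : R) : R :=
  if Int.fract x = 0 then 1 else Int.fract x

lemma leftFract_eq_fract_add_ite {R : Type*} [Ring R] [LinearOrder R] [FloorRing R] (x : R) :
    leftFract x = Int.fract x + if Int.fract x = 0 then 1 else 0 := by
  unfold leftFract
  split_ifs with h <;> simp [h]

lemma sq_leftFract_sub_sub_sq_fract_sub {R : Type*} [CommRing R] [LinearOrder R] [FloorRing R]
    (x y : R) :
    (leftFract x - leftFract y) ^ 2 - (Int.fract x - Int.fract y) ^ 2 =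
      -(if Int.fract x = 0 then 2 * Int.fract y - 1 else 0)
        - (if Int.fract y = 0 then 2 * Int.fract x - 1 else 0)
        - 2 * (if Int.fract x = 0 ∧ Int.fract y = 0 then 1 else 0) := by
  unfold leftFract
  by_cases hx : Int.fract x = 0 <;> by_cases hy : Int.fract y = 0 <;>
    simp only [hx, hy, if_true, if_false, and_true, and_false] <;> ring

variable {K : Type*} [Field K] [LinearOrder K] [IsStrictOrderedRing K] [FloorRing K]

lemma fract_natCast_div_eq_zero_iff {n d : ℕ} (hd : d ≠ 0) :
    Int.fract ((n : K) / d) = 0 ↔ d ∣ n := by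
  rw [Int.fract_div_natCast_eq_div_natCast_mod, div_eq_zero_iff, Nat.cast_eq_zero, Nat.cast_eq_zero,
    or_iff_left hd, Nat.dvd_iff_mod_eq_zero]

lemma fract_div_natCast_of_floor_eq {x : K} {n : ℕ} (hx : ⌊x⌋ = n) (d : ℕ) :
    Int.fract (x / d) = x / d - (n / d : ℕ) := by
  rw [Int.fract, Int.floor_div_natCast, hx, ← Int.natCast_div, Int.cast_natCast]

lemma leftFract_succ_div {d : ℕ} (hd : d ≠ 0) (n : ℕ) :
    leftFract (((n + 1 : ℕ) : K) / d) = ((n + 1 : ℕ) : K) / d - (n / d : ℕ) := by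
  simp only [leftFract_eq_fract_add_ite, fract_natCast_div_eq_zero_iff hd]
  rw [fract_div_natCast_of_floor_eq (Int.floor_natCast _), Nat.succ_div]
  push_cast
  ring

end FloorRing

section FinsetSums

lemma sum_range_succ_sub_eq_sum_Ico {G : Type*} [AddCommGroup G] (A B : ℕ → G) {n : ℕ}
    (hn : 0 < n) :
    ∑ i ∈ range n, (A (i + 1) - B i) = A n - B 0 + ∑ i ∈ Ico 1 n, (A i - B i) := by
  have hA : ∑ i ∈ range n, A (i + 1) = A n + ∑ i ∈ Ico 1 n, A i := by
    rw [range_eq_Ico, sum_Ico_add' A 0 n 1, sum_Ico_succ_top (by lia), add_comm]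
  rw [sum_sub_distrib, sum_sub_distrib, hA, sum_range_eq_add_Ico B hn]
  abel

lemma sum_Ico_mul_ite_dvd {M : Type*} [AddCommMonoid M] {a : ℕ} (ha : 0 < a) (b : ℕ) (g : ℕ → M) :
    ∑ i ∈ Ico 1 (a * b), (if a ∣ i then g i else 0) = ∑ k ∈ Ico 1 b, g (a * k) := by
  rw [← sum_filter]
  symm
  refine sum_bij (fun k _ ↦ a * k) (fun k hk ↦ ?_) (fun _ _ _ _ h ↦ Nat.eq_of_mul_eq_mul_left ha h)
    (fun i hi ↦ ?_) fun _ _ ↦ rfl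
  · simp only [mem_Ico, mem_filter] at hk ⊢
    exact ⟨⟨Nat.mul_pos ha hk.1, Nat.mul_lt_mul_of_pos_left hk.2 ha⟩, dvd_mul_right a k⟩
  · simp only [mem_Ico, mem_filter] at hi
    obtain ⟨⟨hpos, hlt⟩, k, rfl⟩ := hi
    exact ⟨k, mem_Ico.2 ⟨Nat.pos_of_mul_pos_left hpos, Nat.lt_of_mul_lt_mul_left hlt⟩, rfl⟩

lemma sum_Ico_sq_leftFract_sub_sub_sq_fract_sub_mul {K : Type*} [Field K] [LinearOrder K]
    [IsStrictOrderedRing K] [FloorRing K] {p q : ℕ} (hp : 0 < p) (hq : 0 < q) (g : ℕ → K) :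
    ∑ i ∈ Ico 1 (p * q), ((leftFract ((i : K) / q) - leftFract ((i : K) / p)) ^ 2
        - (Int.fract ((i : K) / q) - Int.fract ((i : K) / p)) ^ 2) * g i =
      -∑ k ∈ Ico 1 p, (2 * Int.fract ((q : K) * k / p) - 1) * g (q * k)
        - ∑ j ∈ Ico 1 q, (2 * Int.fract ((p : K) * j / q) - 1) * g (p * j)
        - 2 * ∑ m ∈ Ico 1 (p.gcd q), g (p.lcm q * m) := by
  have hk := sum_Ico_mul_ite_dvd hq p fun i ↦ (2 * Int.fract ((i : K) / p) - 1) * g i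
  have hj := sum_Ico_mul_ite_dvd hp q fun i ↦ (2 * Int.fract ((i : K) / q) - 1) * g i
  have hm := sum_Ico_mul_ite_dvd (Nat.lcm_pos hp hq) (p.gcd q) g
  rw [mul_comm q p] at hk
  rw [mul_comm (p.lcm q), Nat.gcd_mul_lcm] at hm
  simp only [Nat.cast_mul] at hk hj
  rw [← hk, ← hj, ← hm, mul_sum, ← sum_neg_distrib, ← sum_sub_distrib, ← sum_sub_distrib]
  refine sum_congr rfl fun i _ ↦ ?_
  simp only [sq_leftFract_sub_sub_sq_fract_sub, fract_natCast_div_eq_zero_iff hp.ne',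
    fract_natCast_div_eq_zero_iff hq.ne', Nat.lcm_dvd_iff, and_comm (a := q ∣ i), sub_mul, neg_mul,
    mul_assoc, ite_mul, zero_mul, one_mul]

end FinsetSums

section PiecewiseAffine

variable {a b s c : ℝ}

lemma intervalIntegrable_sq_affine_div (hc : c = 0 ∨ 0 ∉ Set.uIcc a b) :
    IntervalIntegrable (fun x ↦ (s * x - c) ^ 2 / x) volume a b := by
  rcases hc with rfl | h0
  · have hlin : (fun x : ℝ ↦ (s * x - 0) ^ 2 / x) = fun x ↦ s ^ 2 * x := by
      ext x
      rcases eq_or_ne x 0 with rfl | hx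
      · simp
      · field_simp
        ring
    rw [hlin]
    exact Continuous.intervalIntegrable (by fun_prop) _ _
  · exact ContinuousOn.intervalIntegrable <|
      .div (by fun_prop) (by fun_prop) fun x hx hx0 ↦ h0 (hx0 ▸ hx)

lemma intervalIntegrable_affine_mul_log :
    IntervalIntegrable (fun x ↦ (s * x - c) * log x) volume a b :=
  intervalIntegral.intervalIntegrable_log'.continuousOn_mul (by fun_prop)

lemma continuousOn_sq_affine_mul_log (hc : c = 0 ∨ 0 ∉ Set.uIcc a b) :
    ContinuousOn (fun x ↦ (s * x - c) ^ 2 * log x) (Set.uIcc a b) := by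
  rcases hc with rfl | h0
  · have hfactor : (fun x ↦ (s * x - 0) ^ 2 * log x) = fun x ↦ s ^ 2 * x * (x * log x) := by
      ext x
      ring
    rw [hfactor]
    exact (Continuous.mul (by fun_prop) continuous_mul_log).continuousOn
  · exact .mul (by fun_prop) <| continuousOn_log.mono fun x hx hx0 ↦ h0 (hx0 ▸ hx)

lemma hasDerivAt_sq_affine_mul_log {x : ℝ} (hx : x ≠ 0) :
    HasDerivAt (fun x ↦ (s * x - c) ^ 2 * log x)
      ((s * x - c) ^ 2 / x + 2 * s * ((s * x - c) * log x)) x := by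
  have haffine : HasDerivAt (fun x ↦ s * x - c) s x := by
    simpa using ((hasDerivAt_id x).const_mul s).sub_const c
  refine ((haffine.fun_pow 2).fun_mul (hasDerivAt_log hx)).congr_deriv ?_
  push_cast
  ring

lemma integral_sq_affine_div_add (hc : c = 0 ∨ 0 ∉ Set.uIcc a b) :
    (∫ x in a..b, (s * x - c) ^ 2 / x) + 2 * s * ∫ x in a..b, (s * x - c) * log x =
      (s * b - c) ^ 2 * log b - (s * a - c) ^ 2 * log a := by
  have hdiv : IntervalIntegrable (fun x ↦ (s * x - c) ^ 2 / x) volume a b :=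
    intervalIntegrable_sq_affine_div hc
  have hlog : IntervalIntegrable (fun x ↦ 2 * s * ((s * x - c) * log x)) volume a b :=
    intervalIntegrable_affine_mul_log.const_mul _
  rw [← intervalIntegral.integral_const_mul, ← intervalIntegral.integral_add hdiv hlog]
  exact integral_eq_of_hasDerivAt_off_countable (fun x ↦ (s * x - c) ^ 2 * log x) _
    (Set.countable_singleton 0) (continuousOn_sq_affine_mul_log hc)
    (fun x hx ↦ hasDerivAt_sq_affine_mul_log hx.2) (hdiv.add hlog)

lemma integral_sq_div_add_of_eqOn_affine {f : ℝ → ℝ} {t c : ℕ → ℝ} {n : ℕ}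
    (hf : ∀ i < n, Set.EqOn (fun x ↦ s * x - c i) f (Set.uIoo (t i) (t (i + 1))))
    (hc : ∀ i < n, c i = 0 ∨ 0 ∉ Set.uIcc (t i) (t (i + 1))) :
    (∫ x in t 0..t n, f x ^ 2 / x) + 2 * s * ∫ x in t 0..t n, f x * log x =
      ∑ i ∈ range n, ((s * t (i + 1) - c i) ^ 2 * log (t (i + 1))
        - (s * t i - c i) ^ 2 * log (t i)) := by
  have hdiv : ∀ i < n, Set.EqOn (fun x ↦ (s * x - c i) ^ 2 / x) (fun x ↦ f x ^ 2 / x)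
      (Set.uIoo (t i) (t (i + 1))) := fun i hi x hx ↦ by simp only [← hf i hi hx]
  have hlog : ∀ i < n, Set.EqOn (fun x ↦ (s * x - c i) * log x) (fun x ↦ f x * log x)
      (Set.uIoo (t i) (t (i + 1))) := fun i hi x hx ↦ by simp only [← hf i hi hx]
  rw [← intervalIntegral.sum_integral_adjacent_intervals fun i hi ↦
      (intervalIntegrable_sq_affine_div (hc i hi)).congr_uIoo (hdiv i hi),
    ← intervalIntegral.sum_integral_adjacent_intervals fun i hi ↦
      intervalIntegrable_affine_mul_log.congr_uIoo (hlog i hi),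
    mul_sum, ← sum_add_distrib]
  refine sum_congr rfl fun i hi ↦ ?_
  rw [mem_range] at hi
  rw [← integral_sq_affine_div_add (hc i hi), intervalIntegral.integral_congr_uIoo (hdiv i hi),
    intervalIntegral.integral_congr_uIoo (hlog i hi)]

end PiecewiseAffine

section Sawtooth

variable {p q : ℕ}

lemma fract_mul_sub_fract_mul_eq_affine (hp : 0 < p) (hq : 0 < q) {i : ℕ} {x : ℝ}
    (hx : x ∈ Set.Ico ((i : ℝ) / (p * q)) ((i + 1 : ℕ) / (p * q))) :
    Int.fract (p * x) - Int.fract (q * x) = (p - q) * x - ((i / q : ℕ) - (i / p : ℕ)) := by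
  have hfloor : ⌊x * (p * q)⌋ = i := by
    rw [Int.floor_eq_iff, Int.cast_natCast, ← Nat.cast_succ]
    exact ⟨(div_le_iff₀ (by positivity)).1 hx.1, (lt_div_iff₀ (by positivity)).1 hx.2⟩
  have hpx : (p : ℝ) * x = x * (p * q) / q := by field_simp
  have hqx : (q : ℝ) * x = x * (p * q) / p := by field_simp
  rw [sub_mul, hpx, hqx, fract_div_natCast_of_floor_eq hfloor, fract_div_natCast_of_floor_eq hfloor]
  ring

lemma integral_sq_fract_sub_div_add_eq_sum_range (hp : 0 < p) (hq : 0 < q) :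
    (∫ x in (0 : ℝ)..1, (Int.fract (p * x) - Int.fract (q * x)) ^ 2 / x)
        + 2 * (p - q) * ∫ x in (0 : ℝ)..1, (Int.fract (p * x) - Int.fract (q * x)) * log x =
      ∑ i ∈ range (p * q),
        ((leftFract (((i + 1 : ℕ) : ℝ) / q) - leftFract (((i + 1 : ℕ) : ℝ) / p)) ^ 2
            * log ((i + 1 : ℕ) / (p * q))
          - (Int.fract ((i : ℝ) / q) - Int.fract ((i : ℝ) / p)) ^ 2 * log (i / (p * q))) := by
  let t : ℕ → ℝ := fun i ↦ i / (p * q)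
  let c : ℕ → ℝ := fun i ↦ (i / q : ℕ) - (i / p : ℕ)
  have ht0 : t 0 = 0 := by simp [t]
  have htn : t (p * q) = 1 := by
    simp only [t, Nat.cast_mul]
    field_simp
  have hmono (i : ℕ) : t i ≤ t (i + 1) := by
    simp only [t]
    gcongr
    exact i.le_succ
  have hc (i : ℕ) : c i = 0 ∨ 0 ∉ Set.uIcc (t i) (t (i + 1)) := by
    rcases Nat.eq_zero_or_pos i with rfl | hi
    · simp [c]
    · have hti : 0 < t i := by simp only [t]; positivity
      exact .inr (Set.notMem_uIcc_of_lt hti (hti.trans_le (hmono i)))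
  have hslope (i : ℕ) : ((p : ℝ) - q) * t i = i / q - i / p := by
    simp only [t]
    field_simp
  have hpieces := integral_sq_div_add_of_eqOn_affine (n := p * q) (t := t) (c := c)
    (fun i _ x hx ↦ by
      rw [Set.uIoo_of_le (hmono i)] at hx
      exact (fract_mul_sub_fract_mul_eq_affine hp hq (Set.Ioo_subset_Ico_self hx)).symm)
    fun i _ ↦ hc i
  rw [ht0, htn] at hpieces
  refine hpieces.trans (sum_congr rfl fun i _ ↦ ?_)
  simp only [hslope, leftFract_succ_div hp.ne', leftFract_succ_div hq.ne',
    fract_div_natCast_of_floor_eq (Int.floor_natCast i)]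
  ring

lemma integral_sq_fract_sub_div_add_eq_sum_Ico (hp : 0 < p) (hq : 0 < q) :
    (∫ x in (0 : ℝ)..1, (Int.fract (p * x) - Int.fract (q * x)) ^ 2 / x)
        + 2 * (p - q) * ∫ x in (0 : ℝ)..1, (Int.fract (p * x) - Int.fract (q * x)) * log x =
      ∑ i ∈ Ico 1 (p * q), ((leftFract ((i : ℝ) / q) - leftFract ((i : ℝ) / p)) ^ 2
          - (Int.fract ((i : ℝ) / q) - Int.fract ((i : ℝ) / p)) ^ 2) * log (i / (p * q)) := by
  rw [integral_sq_fract_sub_div_add_eq_sum_range hp hq, sum_range_succ_sub_eq_sum_Ico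
    (fun i ↦ (leftFract ((i : ℝ) / q) - leftFract ((i : ℝ) / p)) ^ 2 * log (i / (p * q)))
    (fun i ↦ (Int.fract ((i : ℝ) / q) - Int.fract ((i : ℝ) / p)) ^ 2 * log (i / (p * q)))
    (Nat.mul_pos hp hq)]
  have hlast : ((p * q : ℕ) : ℝ) / (p * q) = 1 := by
    rw [Nat.cast_mul]
    field_simp
  simp only [hlast, log_one, Nat.cast_zero, zero_div, log_zero, mul_zero, sub_zero, zero_add,
    sub_mul]

end Sawtooth

/-- Exact formula for `∫₀¹ ({px} - {qx})²/x dx` in terms of boundary sums. -/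
theorem integral_sq_fract_diff_div (p q : ℕ) (hp : 0 < p) (hq : 0 < q) :
    (∫ x in Set.Ioc (0 : ℝ) 1, (Int.fract (p * x) - Int.fract (q * x)) ^ 2 / x)
      = -2 * ((p : ℝ) - q) *
          (∫ x in Set.Ioc (0 : ℝ) 1, (Int.fract (p * x) - Int.fract (q * x)) * Real.log x)
        - ∑ k ∈ Finset.Ico 1 p, (2 * Int.fract ((q : ℝ) * k / p) - 1) * Real.log ((k : ℝ) / p)
        - ∑ j ∈ Finset.Ico 1 q, (2 * Int.fract ((p : ℝ) * j / q) - 1) * Real.log ((j : ℝ) / q)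
        - 2 * ∑ m ∈ Finset.Ico 1 (Nat.gcd p q),
            Real.log ((m : ℝ) / (Nat.gcd p q)) := by
  have hk (k : ℕ) : ((q * k : ℕ) : ℝ) / (p * q) = k / p := by
    rw [Nat.cast_mul]
    field_simp
  have hj (j : ℕ) : ((p * j : ℕ) : ℝ) / (p * q) = j / q := by
    rw [Nat.cast_mul]
    field_simp
  have hm (m : ℕ) : ((p.lcm q * m : ℕ) : ℝ) / (p * q) = m / p.gcd q := by
    have hlcm : (p.lcm q : ℝ) ≠ 0 := mod_cast (Nat.lcm_pos hp hq).ne'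
    rw [← Nat.cast_mul p q, ← Nat.gcd_mul_lcm p q, mul_comm (p.gcd q), Nat.cast_mul, Nat.cast_mul,
      mul_div_mul_left _ _ hlcm]
  have hjumps := (integral_sq_fract_sub_div_add_eq_sum_Ico hp hq).trans
    (sum_Ico_sq_leftFract_sub_sub_sq_fract_sub_mul hp hq fun i ↦ log (i / (p * q)))
  simp only [hk, hj, hm, intervalIntegral.integral_of_le zero_le_one] at hjumps
  linear_combination hjumps
end

section
/- Let f be a non-negative measurable function on [0,1] such that f is integrable on [0,1] and x ↦ f(x)/x is integrable in a neighbourhood of 0. Then ∫₀¹ f({t x})/x dx = (log t)·∫₀¹ f(x) dx + O(1) as t → +∞: there exist constants C > 0 and T > 1 such that |∫₀¹ f({t x})/x dx − (log t)·∫₀¹ f(x) dx| ≤ C for all t ≥ T. -/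
open MeasureTheory Real

/-!
After substituting `y = t x`, the integral becomes `∫₀ᵗ f({y})/y dy`, whose part over `(0, 1]` does
not depend on `t`. On `[1, t]`, subtract from the periodic function `f({y})` its mean `I`, which
contributes `I log t`. What remains has integral zero over every period `[a, b]`, so there the
weight `1/y` may be replaced by `1/y - 1/b`, which lies between `0` and `1/a - 1/b`; these bounds
telescope.
-/

section

open Set intervalIntegral

theorem exists_nat_mem_Ico_add_mul {K : Type*} [Field K] [LinearOrder K] [IsStrictOrderedRing K]
    [FloorSemiring K] {T a b : K} (hT : 0 < T) (hab : a ≤ b) :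
    ∃ n : ℕ, b ∈ Ico (a + n * T) (a + n * T + T) := by
  refine ⟨⌊(b - a) / T⌋₊, ?_, ?_⟩
  · have := (le_div_iff₀ hT).1 (Nat.floor_le (div_nonneg (sub_nonneg.2 hab) hT.le))
    linarith
  · have := (div_lt_iff₀ hT).1 (Nat.lt_floor_add_one ((b - a) / T))
    linarith

theorem integral_norm_add_period {E : Type*} [NormedAddCommGroup E] {g : ℝ → E} {T : ℝ}
    (hg : Function.Periodic g T) (a : ℝ) :
    ∫ x in a..a + T, ‖g x‖ = ∫ x in 0..T, ‖g x‖ := by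
  simpa using (hg.comp norm).intervalIntegral_add_eq a 0

variable {E : Type*} [NormedAddCommGroup E] [NormedSpace ℝ E]

section AntitoneWeight

variable {μ : Measure ℝ} {w : ℝ → ℝ} {g : ℝ → E} {a b : ℝ}

theorem intervalIntegrable_smul_of_antitoneOn (hw : AntitoneOn w (uIcc a b))
    (hg : IntervalIntegrable g μ a b) : IntervalIntegrable (fun x ↦ w x • g x) μ a b := by
  have hw' : AntitoneOn w (uIoc a b) := hw.mono uIoc_subset_uIcc
  rw [intervalIntegrable_iff] at hg ⊢
  refine hg.bdd_smul (max |w (max a b)| |w (min a b)|)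
    (aemeasurable_restrict_of_antitoneOn measurableSet_uIoc hw').aestronglyMeasurable ?_
  filter_upwards [ae_restrict_mem measurableSet_uIoc] with x hx
  have hx : x ∈ uIcc a b := uIoc_subset_uIcc hx
  exact abs_le_max_abs_abs (hw hx ⟨min_le_max, le_rfl⟩ hx.2) (hw ⟨le_rfl, min_le_max⟩ hx hx.1)

theorem norm_integral_smul_le_of_antitoneOn (hab : a ≤ b) (hw : AntitoneOn w (Icc a b))
    (hwb : 0 ≤ w b) (hg : IntervalIntegrable g μ a b) :
    ‖∫ x in a..b, w x • g x ∂μ‖ ≤ w a * ∫ x in a..b, ‖g x‖ ∂μ := by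
  rw [← intervalIntegral.integral_const_mul]
  refine norm_integral_le_of_norm_le hab (.of_forall fun x hx ↦ ?_) (hg.norm.const_mul _)
  have hx : x ∈ Icc a b := Ioc_subset_Icc_self hx
  have hwx : 0 ≤ w x := hwb.trans (hw hx (right_mem_Icc.2 hab) hx.2)
  rw [norm_smul, norm_of_nonneg hwx]
  gcongr
  exact hw (left_mem_Icc.2 hab) hx hx.1

theorem norm_integral_smul_le_of_antitoneOn_of_integral_eq_zero (hab : a ≤ b)
    (hw : AntitoneOn w (Icc a b)) (hg : IntervalIntegrable g μ a b)
    (hg₀ : ∫ x in a..b, g x ∂μ = 0) :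
    ‖∫ x in a..b, w x • g x ∂μ‖ ≤ (w a - w b) * ∫ x in a..b, ‖g x‖ ∂μ := by
  have hwg : IntervalIntegrable (fun x ↦ w x • g x) μ a b :=
    intervalIntegrable_smul_of_antitoneOn (by rwa [uIcc_of_le hab]) hg
  have h_shift : ∫ x in a..b, (w x - w b) • g x ∂μ = ∫ x in a..b, w x • g x ∂μ := by
    simp_rw [sub_smul]
    rw [integral_sub hwg (hg.continuousOn_smul continuousOn_const),
      intervalIntegral.integral_smul, hg₀, smul_zero, sub_zero]
  rw [← h_shift]
  exact norm_integral_smul_le_of_antitoneOn (w := fun x ↦ w x - w b) hab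
    (fun x hx y hy hxy ↦ sub_le_sub_right (hw hx hy hxy) _) (sub_self _).ge hg

theorem integral_smul_add_adjacent_of_antitoneOn {c : ℝ} (hab : a ≤ b) (hbc : b ≤ c)
    (hw : AntitoneOn w (Icc a c)) (hg : IntervalIntegrable g μ a c) :
    (∫ x in a..b, w x • g x ∂μ) + ∫ x in b..c, w x • g x ∂μ = ∫ x in a..c, w x • g x ∂μ := by
  have hwg : IntervalIntegrable (fun x ↦ w x • g x) μ a c :=
    intervalIntegrable_smul_of_antitoneOn (by rwa [uIcc_of_le (hab.trans hbc)]) hg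
  have hb : b ∈ uIcc a c := mem_uIcc_of_le hab hbc
  exact integral_add_adjacent_intervals (hwg.mono_set (uIcc_subset_uIcc_left hb))
    (hwg.mono_set (uIcc_subset_uIcc_right hb))

end AntitoneWeight

theorem integral_inv_smul_comp_mul_left (g : ℝ → E) (a b : ℝ) {c : ℝ} (hc : c ≠ 0) :
    ∫ x in a..b, x⁻¹ • g (c * x) = ∫ x in c * a..c * b, x⁻¹ • g x := by
  rw [← smul_integral_comp_mul_left, ← intervalIntegral.integral_smul]
  simp_rw [smul_smul, mul_inv, mul_inv_cancel_left₀ hc]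

section Periodic

variable {w : ℝ → ℝ} {g : ℝ → E} {T a b : ℝ}

theorem norm_integral_smul_le_of_periodic_of_nat_mul (hT : 0 < T) (hg : Function.Periodic g T)
    (hgi : IntervalIntegrable g volume 0 T) (hg₀ : ∫ x in 0..T, g x = 0) (n : ℕ)
    (hw : AntitoneOn w (Icc a (a + n * T))) :
    ‖∫ x in a..a + n * T, w x • g x‖ ≤ (w a - w (a + n * T)) * ∫ x in 0..T, ‖g x‖ := by
  induction n with
  | zero => simp
  | succ n ih =>
    set c := a + n * T
    have hcT : a + (n + 1 : ℕ) * T = c + T := by push_cast; ring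
    rw [hcT] at hw ⊢
    have hac : a ≤ c := le_add_of_nonneg_right (by positivity)
    have hc_le : c ≤ c + T := le_add_of_nonneg_right hT.le
    have hw_init : AntitoneOn w (Icc a c) := hw.mono (Icc_subset_Icc_right hc_le)
    have hw_last : AntitoneOn w (Icc c (c + T)) := hw.mono (Icc_subset_Icc_left hac)
    have hgi' := hg.intervalIntegrable₀ hT.ne' hgi
    have h_last : ‖∫ x in c..c + T, w x • g x‖ ≤ (w c - w (c + T)) * ∫ x in 0..T, ‖g x‖ := by
      have h := norm_integral_smul_le_of_antitoneOn_of_integral_eq_zero hc_le hw_last (hgi' _ _)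
        (by rw [hg.intervalIntegral_add_eq c 0, zero_add, hg₀])
      rwa [integral_norm_add_period hg] at h
    rw [← integral_smul_add_adjacent_of_antitoneOn hac hc_le hw (hgi' _ _)]
    calc ‖(∫ x in a..c, w x • g x) + ∫ x in c..c + T, w x • g x‖
        ≤ (w a - w c) * (∫ x in 0..T, ‖g x‖) + (w c - w (c + T)) * ∫ x in 0..T, ‖g x‖ :=
          norm_add_le_of_le (ih hw_init) h_last
      _ = (w a - w (c + T)) * ∫ x in 0..T, ‖g x‖ := by ring

theorem norm_integral_smul_le_of_periodic (hT : 0 < T) (hg : Function.Periodic g T)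
    (hgi : IntervalIntegrable g volume 0 T) (hg₀ : ∫ x in 0..T, g x = 0) (hab : a ≤ b)
    (hw : AntitoneOn w (Icc a b)) (hwb : 0 ≤ w b) :
    ‖∫ x in a..b, w x • g x‖ ≤ w a * ∫ x in 0..T, ‖g x‖ := by
  obtain ⟨n, hnb, hbn⟩ := exists_nat_mem_Ico_add_mul hT hab
  have h_init := norm_integral_smul_le_of_periodic_of_nat_mul hT hg hgi hg₀ n
    (hw.mono (Icc_subset_Icc_right hnb))
  set c := a + n * T
  have hac : a ≤ c := le_add_of_nonneg_right (by positivity)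
  have hw_last : AntitoneOn w (Icc c b) := hw.mono (Icc_subset_Icc_left hac)
  have hwc : 0 ≤ w c := hwb.trans (hw ⟨hac, hnb⟩ (right_mem_Icc.2 hab) hnb)
  have hgi' := hg.intervalIntegrable₀ hT.ne' hgi
  have h_part : ∫ x in c..b, ‖g x‖ ≤ ∫ x in 0..T, ‖g x‖ := by
    have h := integral_mono_interval le_rfl hnb hbn.le (.of_forall fun x ↦ norm_nonneg (g x))
      (hgi' c (c + T)).norm
    rwa [integral_norm_add_period hg] at h
  have h_last : ‖∫ x in c..b, w x • g x‖ ≤ w c * ∫ x in 0..T, ‖g x‖ :=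
    (norm_integral_smul_le_of_antitoneOn hnb hw_last hwb (hgi' c b)).trans (by gcongr)
  rw [← integral_smul_add_adjacent_of_antitoneOn hac hnb hw (hgi' _ _)]
  calc ‖(∫ x in a..c, w x • g x) + ∫ x in c..b, w x • g x‖
      ≤ (w a - w c) * (∫ x in 0..T, ‖g x‖) + w c * ∫ x in 0..T, ‖g x‖ :=
        norm_add_le_of_le h_init h_last
    _ = w a * ∫ x in 0..T, ‖g x‖ := by ring

theorem intervalIntegrable_inv_smul (h₀ : 0 ∉ uIcc a b) (hg : IntervalIntegrable g volume a b) :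
    IntervalIntegrable (fun x ↦ x⁻¹ • g x) volume a b :=
  hg.continuousOn_smul <| continuousOn_id.inv₀ fun _ hx ↦ ne_of_mem_of_not_mem hx h₀

theorem norm_integral_inv_smul_sub_log_smul_average_le [CompleteSpace E] (hT : 0 < T)
    (hg : Function.Periodic g T) (hgi : IntervalIntegrable g volume 0 T) (ha : 0 < a)
    (hab : a ≤ b) :
    ‖(∫ x in a..b, x⁻¹ • g x) - log (b / a) • ⨍ x in 0..T, g x‖ ≤
      a⁻¹ * ∫ x in 0..T, ‖g x - ⨍ y in 0..T, g y‖ := by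
  set m := ⨍ x in 0..T, g x with hm
  have hb : 0 < b := ha.trans_le hab
  have h₀ : 0 ∉ uIcc a b := notMem_uIcc_of_lt ha hb
  have h_mean : ∫ x in 0..T, (g x - m) = 0 := by
    rw [integral_sub hgi intervalIntegrable_const, intervalIntegral.integral_const, hm,
      interval_average_eq, sub_zero, smul_inv_smul₀ hT.ne', sub_self]
  have h_sub : (∫ x in a..b, x⁻¹ • g x) - log (b / a) • m = ∫ x in a..b, x⁻¹ • (g x - m) := by
    simp_rw [smul_sub]
    rw [integral_sub (intervalIntegrable_inv_smul h₀ (hg.intervalIntegrable₀ hT.ne' hgi a b))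
      (intervalIntegrable_inv_smul h₀ intervalIntegrable_const),
      intervalIntegral.integral_smul_const, integral_inv h₀]
  rw [h_sub]
  exact norm_integral_smul_le_of_periodic hT (fun x ↦ by rw [hg x])
    (hgi.sub intervalIntegrable_const) h_mean hab
    (fun x hx y _ hxy ↦ inv_anti₀ (ha.trans_le hx.1) hxy) (inv_nonneg.2 hb.le)

theorem norm_integral_inv_smul_comp_mul_sub_log_smul_average_le [CompleteSpace E] (hT : 0 < T)
    (hg : Function.Periodic g T) (hgi : IntervalIntegrable g volume 0 T) (hb : 0 < b)
    (hg_inv : IntervalIntegrable (fun x ↦ x⁻¹ • g x) volume 0 b) {t : ℝ} (ht : 1 ≤ t) :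
    ‖(∫ x in 0..b, x⁻¹ • g (t * x)) - log t • ⨍ x in 0..T, g x‖ ≤
      ‖∫ x in 0..b, x⁻¹ • g x‖ + b⁻¹ * ∫ x in 0..T, ‖g x - ⨍ y in 0..T, g y‖ := by
  have ht₀ : 0 < t := one_pos.trans_le ht
  have h_away : IntervalIntegrable (fun x ↦ x⁻¹ • g x) volume b (t * b) :=
    intervalIntegrable_inv_smul (notMem_uIcc_of_lt hb (mul_pos ht₀ hb))
      (hg.intervalIntegrable₀ hT.ne' hgi _ _)
  have h_tail := norm_integral_inv_smul_sub_log_smul_average_le hT hg hgi hb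
    (le_mul_of_one_le_left hb.le ht)
  rw [mul_div_cancel_right₀ t hb.ne'] at h_tail
  rw [integral_inv_smul_comp_mul_left g 0 b ht₀.ne', mul_zero,
    ← integral_add_adjacent_intervals hg_inv h_away, add_sub_assoc]
  exact norm_add_le_of_le le_rfl h_tail

end Periodic

theorem integrableOn_inv_smul_Ioc {f : ℝ → E} {b ε : ℝ} (hf : IntegrableOn f (Ioc 0 b))
    (hε : 0 < ε) (hfε : IntegrableOn (fun x ↦ x⁻¹ • f x) (Ioc 0 ε)) :
    IntegrableOn (fun x ↦ x⁻¹ • f x) (Ioc 0 b) := by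
  have h_away : IntegrableOn (fun x ↦ x⁻¹ • f x) (Icc ε b) :=
    (hf.mono_set fun x hx ↦ ⟨hε.trans_le hx.1, hx.2⟩).continuousOn_smul
      (continuousOn_id.inv₀ fun x hx ↦ (hε.trans_le hx.1).ne') isCompact_Icc
  refine (hfε.union h_away).mono_set fun x hx ↦ ?_
  exact (le_total x ε).imp (fun h ↦ ⟨hx.1, h⟩) (fun h ↦ ⟨h, hx.2⟩)

theorem fract_ae_eq_id_restrict_Ioc :
    (Int.fract : ℝ → ℝ) =ᵐ[volume.restrict (Ioc 0 1)] id := by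
  rw [← restrict_Ioo_eq_restrict_Ioc]
  filter_upwards [ae_restrict_mem measurableSet_Ioo] with x hx
  exact Int.fract_eq_self.2 ⟨hx.1.le, hx.2⟩

theorem integral_fract_scaling_general [CompleteSpace E] (f : ℝ → E)
    (hint : IntegrableOn f (Icc 0 1))
    (hint0 : ∃ ε > (0 : ℝ), IntegrableOn (fun x ↦ x⁻¹ • f x) (Ioc 0 ε)) :
    ∃ C > (0 : ℝ), ∀ t ≥ (1 : ℝ),
      ‖(∫ x in Ioc (0 : ℝ) 1, x⁻¹ • f (Int.fract (t * x)))
        - log t • ∫ x in Ioc (0 : ℝ) 1, f x‖ ≤ C := by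
  obtain ⟨ε, hε, hfε⟩ := hint0
  have hf : IntegrableOn f (Ioc 0 1) := hint.mono_set Ioc_subset_Icc_self
  set g : ℝ → E := fun x ↦ f (Int.fract x) with hg
  have hg_per : Function.Periodic g 1 := fun x ↦ by simp [hg]
  have hfg : f =ᵐ[volume.restrict (Ioc 0 1)] g :=
    fract_ae_eq_id_restrict_Ioc.symm.fun_comp f
  have hg_int : IntervalIntegrable g volume 0 1 :=
    (intervalIntegrable_iff_integrableOn_Ioc_of_le zero_le_one).2 (hf.congr hfg)
  have hg_inv : IntervalIntegrable (fun x ↦ x⁻¹ • g x) volume 0 1 :=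
    (intervalIntegrable_iff_integrableOn_Ioc_of_le zero_le_one).2 <|
      (integrableOn_inv_smul_Ioc hf hε hfε).congr (hfg.mono fun x hx ↦ congrArg (x⁻¹ • ·) hx)
  have h_avg : ⨍ x in 0..1, g x = ∫ x in Ioc (0 : ℝ) 1, f x := by
    rw [interval_average_eq, sub_zero, inv_one, one_smul, integral_of_le zero_le_one,
      integral_congr_ae hfg]
  set A := ‖∫ x in 0..1, x⁻¹ • g x‖
  set B := (1 : ℝ)⁻¹ * ∫ x in 0..1, ‖g x - ⨍ y in 0..1, g y‖
  refine ⟨max (A + B) 1, by positivity, fun t ht ↦ ?_⟩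
  rw [← integral_of_le zero_le_one, ← h_avg]
  exact (norm_integral_inv_smul_comp_mul_sub_log_smul_average_le one_pos hg_per hg_int one_pos
    hg_inv ht).trans (le_max_left _ _)

end

/-- If `f ≥ 0` is integrable on `[0,1]` and `f(x)/x` is integrable near `0`, then
`∫₀¹ f({t x})/x dx = (log t) ∫₀¹ f + O(1)` as `t → +∞`. -/
theorem integral_fract_scaling (f : ℝ → ℝ) (hmeas : Measurable f)
    (hpos : ∀ x ∈ Set.Icc (0 : ℝ) 1, 0 ≤ f x)
    (hint : IntegrableOn f (Set.Icc (0 : ℝ) 1))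
    (hint0 : ∃ ε > (0 : ℝ), IntegrableOn (fun x => f x / x) (Set.Ioc (0 : ℝ) ε)) :
    ∃ C > (0 : ℝ), ∃ T > (1 : ℝ), ∀ t ≥ T,
      |(∫ x in Set.Ioc (0 : ℝ) 1, f (Int.fract (t * x)) / x)
        - Real.log t * ∫ x in Set.Ioc (0 : ℝ) 1, f x| ≤ C := by
  simp only [div_eq_inv_mul] at hint0 ⊢
  obtain ⟨C, hC, h⟩ := integral_fract_scaling_general f hint hint0
  exact ⟨C, hC, 2, one_lt_two, fun t ht ↦ h t (one_le_two.trans ht)⟩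
end

section
/- Let ν be an irrational real number. Then (1/a)·∫₀^a ({x} − {ν x})² dx converges to 1/6 as a → +∞. -/
open MeasureTheory Real Filter

/-!
Expanding the square, everything reduces to mean values at `+∞` of periodic functions and of the
product `{x} {νx}`. A periodic function has mean value its average over a period, which gives `1/3`
for both squares. The product of two periodic functions with incommensurable periods `T` and `S` has
mean value the product of the two mean values, here `1/2 · 1/2`: one may assume that the first
factor `f` has mean value `0` and approximate the second in `L¹` by trigonometric polynomials. For
`F(x) = exp(2πikx/S) f(x)` with `k ≠ 0`, one has `F(x + T) = w F(x)` with `|w| = 1` and `w ≠ 1`, and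
this makes the primitive of `F` bounded.
-/

open Topology

section HasMeanValue

variable {E F : Type*} [NormedAddCommGroup E] [NormedSpace ℝ E]
  [NormedAddCommGroup F] [NormedSpace ℝ F] {f g : ℝ → E} {m n : E}

/-- `HasMeanValue f m`: the function `f` has mean value `m` at `+∞`, that is, the averages of `f`
over `[0, a]` converge to `m` as `a → +∞`. Integrability over bounded intervals is part of the
notion, so that the averages are not junk values. -/
structure HasMeanValue (f : ℝ → E) (m : E) : Prop where
  intervalIntegrable : ∀ a b, IntervalIntegrable f volume a b
  tendsto : Tendsto (fun a => ⨍ x in 0..a, f x) atTop (𝓝 m)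

namespace HasMeanValue

theorem add (hf : HasMeanValue f m) (hg : HasMeanValue g n) :
    HasMeanValue (fun x => f x + g x) (m + n) where
  intervalIntegrable a b := (hf.intervalIntegrable a b).add (hg.intervalIntegrable a b)
  tendsto := (hf.tendsto.add hg.tendsto).congr fun a => by
    simp only [interval_average_eq, ← smul_add]
    rw [intervalIntegral.integral_add (hf.intervalIntegrable 0 a) (hg.intervalIntegrable 0 a)]

theorem clm_apply [CompleteSpace E] [CompleteSpace F] (L : E →L[ℝ] F) (hf : HasMeanValue f m) :
    HasMeanValue (fun x => L (f x)) (L m) where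
  intervalIntegrable a b :=
    ⟨L.integrable_comp (hf.intervalIntegrable a b).1,
      L.integrable_comp (hf.intervalIntegrable a b).2⟩
  tendsto := ((L.continuous.tendsto m).comp hf.tendsto).congr fun a => by
    simp only [Function.comp_apply, interval_average_eq, map_smul]
    rw [L.intervalIntegral_comp_comm (hf.intervalIntegrable 0 a)]

theorem const_smul {𝕜 : Type*} [RCLike 𝕜] [NormedSpace 𝕜 E] (c : 𝕜) (hf : HasMeanValue f m) :
    HasMeanValue (fun x => c • f x) (c • m) where
  intervalIntegrable a b := (hf.intervalIntegrable a b).smul c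
  tendsto := (hf.tendsto.const_smul c).congr fun a => by
    simp only [interval_average_eq, intervalIntegral.integral_smul, smul_comm c]

end HasMeanValue

theorem hasMeanValue_const [CompleteSpace E] (m : E) : HasMeanValue (fun _ => m) m where
  intervalIntegrable _ _ := intervalIntegrable_const
  tendsto := tendsto_const_nhds.congr' <| by
    filter_upwards [eventually_gt_atTop 0] with a ha
    simp [interval_average_eq, ha.ne']

theorem hasMeanValue_zero_of_norm_integral_le {B : ℝ}
    (hf : ∀ a b, IntervalIntegrable f volume a b) (hB : ∀ a, ‖∫ x in 0..a, f x‖ ≤ B) :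
    HasMeanValue f 0 where
  intervalIntegrable := hf
  tendsto := by
    have hlim : Tendsto (fun a : ℝ => ‖a⁻¹‖ * B) atTop (𝓝 0) := by
      simpa using (tendsto_inv_atTop_zero (𝕜 := ℝ)).norm.mul_const B
    refine squeeze_zero_norm (fun a => ?_) hlim
    rw [interval_average_eq, sub_zero, norm_smul]
    gcongr
    exact hB a

theorem hasMeanValue_zero_of_approx (hf : ∀ a b, IntervalIntegrable f volume a b)
    (h : ∀ ε > 0, ∃ g r c, HasMeanValue g 0 ∧ HasMeanValue r c ∧ c < ε ∧
      ∀ᵐ x, ‖f x - g x‖ ≤ r x) :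
    HasMeanValue f 0 where
  intervalIntegrable := hf
  tendsto := by
    rw [NormedAddGroup.tendsto_nhds_zero]
    intro ε hε
    obtain ⟨g, r, c, hg, hr, hc, hfg⟩ := h (ε / 2) (half_pos hε)
    filter_upwards [NormedAddGroup.tendsto_nhds_zero.1 hg.tendsto (ε / 2) (half_pos hε),
      hr.tendsto.eventually_lt_const hc, eventually_gt_atTop 0] with a hga hra ha
    have hdiff : ‖(⨍ x in 0..a, f x) - ⨍ x in 0..a, g x‖ ≤ ⨍ x in 0..a, r x := by
      simp only [interval_average_eq, ← smul_sub, norm_smul, sub_zero, norm_inv,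
        Real.norm_of_nonneg ha.le]
      rw [← intervalIntegral.integral_sub (hf 0 a) (hg.intervalIntegrable 0 a), smul_eq_mul]
      gcongr
      exact intervalIntegral.norm_integral_le_of_norm_le ha.le
        (hfg.mono fun x hx _ => hx) (hr.intervalIntegrable 0 a)
    linarith [norm_le_norm_add_norm_sub' (⨍ x in 0..a, f x) (⨍ x in 0..a, g x)]

section QuasiPeriodic

variable {𝕜 : Type*} [RCLike 𝕜] [NormedSpace 𝕜 E] {T : ℝ} {w : 𝕜}

-- The primitive of `f` based at `0`, minus `c`, is also multiplied by `w` under translation by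
-- `T`, so its norm is periodic and continuous, hence bounded.
theorem hasMeanValue_zero_of_map_add_eq_smul {c : E}
    (hf : ∀ a b, IntervalIntegrable f volume a b) (hT : T ≠ 0) (hw : ‖w‖ = 1)
    (hfw : ∀ x, f (x + T) = w • f x) (hc : ∫ x in 0..T, f x = c - w • c) :
    HasMeanValue f 0 := by
  have hprim (a : ℝ) : (∫ x in 0..a + T, f x) - c = w • ((∫ x in 0..a, f x) - c) := by
    have htail : ∫ x in T..a + T, f x = w • ∫ x in 0..a, f x := by
      rw [← intervalIntegral.integral_smul]
      simp_rw [← hfw]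
      rw [intervalIntegral.integral_comp_add_right, zero_add]
    rw [← intervalIntegral.integral_add_adjacent_intervals (hf 0 T) (hf T (a + T)), htail, hc,
      smul_sub]
    abel
  have hper : Function.Periodic (fun a => ‖(∫ x in 0..a, f x) - c‖) T := fun a => by
    simp only [hprim, norm_smul, hw, one_mul]
  have hcont : Continuous fun a => ‖(∫ x in 0..a, f x) - c‖ :=
    ((intervalIntegral.continuous_primitive hf 0).sub continuous_const).norm
  obtain ⟨B, hB⟩ := (hper.isBounded_of_continuous hT hcont).exists_norm_le
  refine hasMeanValue_zero_of_norm_integral_le (B := ‖c‖ + B) hf fun a => ?_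
  have hBa : ‖(∫ x in 0..a, f x) - c‖ ≤ B := by simpa using hB _ ⟨a, rfl⟩
  exact (norm_le_norm_add_norm_sub' _ c).trans (by gcongr)

theorem hasMeanValue_zero_of_map_add_eq_smul_of_ne_one
    (hf : ∀ a b, IntervalIntegrable f volume a b) (hT : T ≠ 0) (hw : ‖w‖ = 1) (hw1 : w ≠ 1)
    (hfw : ∀ x, f (x + T) = w • f x) : HasMeanValue f 0 := by
  refine hasMeanValue_zero_of_map_add_eq_smul
    (c := (1 - w)⁻¹ • ∫ x in 0..T, f x) hf hT hw hfw ?_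
  calc ∫ x in 0..T, f x = (1 - w) • (1 - w)⁻¹ • ∫ x in 0..T, f x :=
        (smul_inv_smul₀ (sub_ne_zero.2 hw1.symm) _).symm
    _ = _ := by rw [sub_smul, one_smul]

end QuasiPeriodic

section Periodic

variable [CompleteSpace E] {T : ℝ}

theorem hasMeanValue_of_periodic (hfT : Function.Periodic f T) (hT : T ≠ 0)
    (hf : IntervalIntegrable f volume 0 T) : HasMeanValue f (⨍ x in 0..T, f x) := by
  have hint := hfT.intervalIntegrable₀ hT hf
  have hcentred : HasMeanValue (fun x => f x - ⨍ y in 0..T, f y) 0 := by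
    refine hasMeanValue_zero_of_map_add_eq_smul (𝕜 := ℝ) (w := 1) (c := 0)
      (fun a b => (hint a b).sub intervalIntegrable_const) hT norm_one
      (fun x => by rw [hfT, one_smul]) ?_
    rw [intervalIntegral.integral_sub hf intervalIntegrable_const,
      intervalIntegral.integral_const, interval_average_eq]
    simp [hT]
  simpa using hcentred.add (hasMeanValue_const (⨍ y in 0..T, f y))

theorem hasMeanValue_comp_mul_left_of_periodic {c : ℝ} (hfT : Function.Periodic f T) (hT : T ≠ 0)
    (hf : IntervalIntegrable f volume 0 T) (hc : c ≠ 0) :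
    HasMeanValue (fun x => f (c * x)) (⨍ x in 0..T, f x) := by
  have hcT : c⁻¹ * T ≠ 0 := mul_ne_zero (inv_ne_zero hc) hT
  convert hasMeanValue_of_periodic (hfT.const_mul c) hcT ?_ using 1
  · simp only [interval_average_eq, sub_zero, intervalIntegral.integral_comp_mul_left _ hc,
      mul_zero, mul_inv_cancel_left₀ hc, smul_smul]
    congr 1
    field_simp
  · simpa [div_eq_inv_mul] using hf.comp_mul_left (c := c)

end Periodic

end HasMeanValue

section Fourier

variable {S : ℝ}

theorem exists_mem_span_fourier_average_norm_sub_lt [hS : Fact (0 < S)] {g : ℝ → ℂ}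
    (hg : IntervalIntegrable g volume 0 S) {ε : ℝ} (hε : 0 < ε) :
    ∃ P ∈ Submodule.span ℂ (Set.range (@fourier S)),
      ⨍ x in 0..S, ‖g x - P (x : AddCircle S)‖ < ε := by
  have hG : MemLp (AddCircle.liftIoc S 0 g) 1 AddCircle.haarAddCircle := by
    refine (MemLp.memLp_liftIoc ?_).haarAddCircle
    rw [zero_add, memLp_one_iff_integrable]
    exact hg.1
  have hdense := (ContinuousMap.toLp_denseRange ℂ (@AddCircle.haarAddCircle S _) ℂ
    ENNReal.one_ne_top).topologicalClosure_map_submodule span_fourier_closure_eq_top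
  obtain ⟨_, ⟨P, hP, rfl⟩, hdist⟩ := Metric.mem_closure_iff.1
    (hdense.ge (Submodule.mem_top (x := hG.toLp))) ε hε
  refine ⟨P, hP, ?_⟩
  calc ⨍ x in 0..S, ‖g x - P (x : AddCircle S)‖
      = S⁻¹ • ∫ x in 0..0 + S, ‖AddCircle.liftIoc S 0 g x - P (x : AddCircle S)‖ := by
        rw [interval_average_eq, sub_zero, zero_add]
        congr 1
        refine intervalIntegral.integral_congr_ae (Eventually.of_forall fun x hx => ?_)
        rw [Set.uIoc_of_le hS.out.le] at hx
        rw [AddCircle.liftIoc_coe_apply (by rwa [zero_add])]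
    _ = ∫ x, ‖AddCircle.liftIoc S 0 g x - P x‖ ∂AddCircle.haarAddCircle := by
        rw [AddCircle.integral_haarAddCircle, ← AddCircle.intervalIntegral_preimage S 0]
    _ = dist hG.toLp (ContinuousMap.toLp 1 AddCircle.haarAddCircle ℂ P) := by
        rw [dist_eq_norm, L1.norm_eq_integral_norm]
        refine integral_congr_ae ?_
        filter_upwards [Lp.coeFn_sub hG.toLp (ContinuousMap.toLp 1 AddCircle.haarAddCircle ℂ P),
          hG.coeFn_toLp, ContinuousMap.coeFn_toLp (p := 1) (𝕜 := ℂ) AddCircle.haarAddCircle P]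
          with x hsub hgx hPx
        rw [hsub, Pi.sub_apply, hgx, hPx]
    _ < ε := hdist

theorem fourier_coe_ne_one_of_irrational_div {T : ℝ} (h : Irrational (T / S)) {k : ℤ}
    (hk : k ≠ 0) : fourier k (T : AddCircle S) ≠ 1 := by
  have hS : S ≠ 0 := by rintro rfl; simp at h
  intro hone
  rw [fourier_apply, Circle.coe_eq_one, ← AddCircle.toCircle_zero] at hone
  obtain ⟨n, hn⟩ := (AddCircle.coe_eq_zero_iff S).1 (AddCircle.injective_toCircle hS hone)
  refine (h.intCast_mul hk).ne_int n ?_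
  rw [← mul_div_assoc, div_eq_iff hS, ← zsmul_eq_mul, ← zsmul_eq_mul, hn]

end Fourier

section Incommensurable

variable {E : Type*} [NormedAddCommGroup E] [NormedSpace ℂ E] {f : ℝ → E} {S T : ℝ}

theorem HasMeanValue.fourier_smul (hf : HasMeanValue f 0)
    (hfT : Function.Periodic f T) (h : Irrational (T / S)) (k : ℤ) :
    HasMeanValue (fun x => fourier k (x : AddCircle S) • f x) 0 := by
  rcases eq_or_ne k 0 with rfl | hk
  · simpa only [fourier_zero, one_smul] using hf
  have hT : T ≠ 0 := by rintro rfl; simp at h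
  refine hasMeanValue_zero_of_map_add_eq_smul_of_ne_one (fun a b => ?_) hT (Circle.norm_coe _)
    (fourier_coe_ne_one_of_irrational_div h hk) fun x => ?_
  · refine (hf.intervalIntegrable a b).continuousOn_smul (Continuous.continuousOn ?_)
    exact (map_continuous _).comp (AddCircle.continuous_mk' S)
  · simp only [hfT x, smul_smul, AddCircle.coe_add, fourier_apply, smul_add,
      AddCircle.toCircle_add, Circle.coe_mul, mul_comm]

theorem HasMeanValue.trigPolynomial_smul (hf : HasMeanValue f 0)
    (hfT : Function.Periodic f T) (h : Irrational (T / S)) {P : C(AddCircle S, ℂ)}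
    (hP : P ∈ Submodule.span ℂ (Set.range (@fourier S))) :
    HasMeanValue (fun x => P (x : AddCircle S) • f x) 0 := by
  induction hP using Submodule.span_induction with
  | mem P hP =>
    obtain ⟨k, rfl⟩ := hP
    exact hf.fourier_smul hfT h k
  | zero => simpa using hf.const_smul (0 : ℂ)
  | add P Q _ _ hP hQ => simpa [add_smul] using hP.add hQ
  | smul c P _ hP => simpa [mul_smul] using hP.const_smul c

theorem HasMeanValue.smul_zero_of_irrational_div [Fact (0 < S)] {g : ℝ → ℂ} {C : ℝ}
    (hf : HasMeanValue f 0) (hfT : Function.Periodic f T) (hfC : ∀ᵐ x, ‖f x‖ ≤ C)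
    (hg : ∀ a b, IntervalIntegrable g volume a b) (hgS : Function.Periodic g S)
    (h : Irrational (T / S)) : HasMeanValue (fun x => g x • f x) 0 := by
  have hS : 0 < S := Fact.out
  have hgf (a b : ℝ) : IntervalIntegrable (fun x => g x • f x) volume a b :=
    intervalIntegrable_iff.2 <| (hg a b).def'.smul_bdd C
      (hf.intervalIntegrable a b).def'.aestronglyMeasurable (ae_restrict_of_ae hfC)
  refine hasMeanValue_zero_of_approx hgf fun ε hε => ?_
  have hC : 0 ≤ C := hfC.exists.elim fun x hx => (norm_nonneg _).trans hx
  obtain ⟨P, hP, hPε⟩ := exists_mem_span_fourier_average_norm_sub_lt (hg 0 S)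
    (show 0 < ε / (C + 1) by positivity)
  have hdiff : HasMeanValue (fun x => ‖g x - P (x : AddCircle S)‖)
      (⨍ x in 0..S, ‖g x - P (x : AddCircle S)‖) := by
    refine hasMeanValue_of_periodic (fun x => ?_) hS.ne' ?_
    · simp only [hgS x, AddCircle.coe_add_period]
    · exact ((hg 0 S).sub (((map_continuous P).comp
        (AddCircle.continuous_mk' S)).intervalIntegrable 0 S)).norm
  refine ⟨_, _, _, hf.trigPolynomial_smul hfT h hP, hdiff.const_smul (C + 1), ?_,
    hfC.mono fun x hx => ?_⟩
  · rwa [smul_eq_mul, ← lt_div_iff₀' (by positivity)]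
  · rw [← sub_smul, norm_smul, smul_eq_mul, mul_comm]
    gcongr
    linarith

theorem HasMeanValue.smul_of_irrational_div [CompleteSpace E] {g : ℝ → ℂ} {m : E} {n : ℂ} {C : ℝ}
    (hg : HasMeanValue g n) (hf : HasMeanValue f m) (hgS : Function.Periodic g S)
    (hfT : Function.Periodic f T) (hfC : ∀ᵐ x, ‖f x‖ ≤ C) (h : Irrational (T / S)) :
    HasMeanValue (fun x => g x • f x) (n • m) := by
  wlog hS : 0 < S generalizing S
  · refine this (S := -S) hgS.neg (by simpa [div_neg] using h.neg) ?_
    have : S ≠ 0 := by rintro rfl; simp at h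
    grind
  have : Fact (0 < S) := ⟨hS⟩
  have hcentred : HasMeanValue (fun x => f x - m) 0 := by
    simpa [sub_eq_add_neg] using hf.add (hasMeanValue_const (-m))
  have hcentred_smul : HasMeanValue (fun x => g x • (f x - m)) 0 :=
    hcentred.smul_zero_of_irrational_div (fun x => by simp only [hfT x])
      (hfC.mono fun x hx => (norm_sub_le _ _).trans (add_le_add_left hx ‖m‖))
      hg.intervalIntegrable hgS h
  have hconst : HasMeanValue (fun x => g x • m) (n • m) :=
    hg.clm_apply (((1 : ℂ →L[ℂ] ℂ).smulRight m).restrictScalars ℝ)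
  simpa [smul_sub] using hcentred_smul.add hconst

theorem HasMeanValue.mul_of_irrational_div {f g : ℝ → ℝ} {m n C : ℝ}
    (hg : HasMeanValue g n) (hf : HasMeanValue f m) (hgS : Function.Periodic g S)
    (hfT : Function.Periodic f T) (hfC : ∀ᵐ x, ‖f x‖ ≤ C) (h : Irrational (T / S)) :
    HasMeanValue (fun x => g x * f x) (n * m) := by
  have hcomplex : HasMeanValue (fun x => (g x : ℂ) • (f x : ℂ)) ((n : ℂ) • (m : ℂ)) :=
    (hg.clm_apply Complex.ofRealCLM).smul_of_irrational_div (hf.clm_apply Complex.ofRealCLM)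
      (hgS.comp ((↑) : ℝ → ℂ)) (hfT.comp ((↑) : ℝ → ℂ)) (by simpa using hfC) h
  simpa using hcomplex.clm_apply Complex.reCLM

end Incommensurable

section Fract

theorem norm_fract_le_one (x : ℝ) : ‖Int.fract x‖ ≤ 1 := by
  rw [Real.norm_eq_abs, Int.abs_fract]
  exact (Int.fract_lt_one x).le

theorem integral_fract_pow (n : ℕ) : ∫ x in (0 : ℝ)..1, Int.fract x ^ n = 1 / (n + 1) := by
  calc ∫ x in (0 : ℝ)..1, Int.fract x ^ n = ∫ x in (0 : ℝ)..1, x ^ n :=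
        intervalIntegral.integral_congr_Ioo_of_le zero_le_one fun x hx => by
          simp only [Int.fract_eq_self.2 ⟨hx.1.le, hx.2⟩]
    _ = 1 / (n + 1) := by simp

theorem intervalIntegrable_fract_pow (n : ℕ) (a b : ℝ) :
    IntervalIntegrable (fun x : ℝ => Int.fract x ^ n) volume a b := by
  rw [intervalIntegrable_iff]
  refine Measure.integrableOn_of_bounded (M := 1) (by simp)
    (measurable_fract.pow_const n).aestronglyMeasurable (Eventually.of_forall fun x => ?_)
  rw [norm_pow]
  exact pow_le_one₀ (norm_nonneg _) (norm_fract_le_one x)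

theorem hasMeanValue_fract_mul_pow {c : ℝ} (hc : c ≠ 0) (n : ℕ) :
    HasMeanValue (fun x => Int.fract (c * x) ^ n) (1 / (n + 1)) := by
  have hper : Function.Periodic (fun x : ℝ => Int.fract x ^ n) 1 := fun x => by simp
  convert hasMeanValue_comp_mul_left_of_periodic hper one_ne_zero
    (intervalIntegrable_fract_pow n 0 1) hc using 1
  rw [interval_average_eq, integral_fract_pow]
  simp

theorem hasMeanValue_fract_mul_fract {ν : ℝ} (hν : Irrational ν) :
    HasMeanValue (fun x => Int.fract x * Int.fract (ν * x)) (1 / 4) := by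
  have hmean {c : ℝ} (hc : c ≠ 0) : HasMeanValue (fun x => Int.fract (c * x)) (1 / 2) := by
    simpa [one_add_one_eq_two] using hasMeanValue_fract_mul_pow hc 1
  have hone : HasMeanValue (fun x : ℝ => Int.fract x) (1 / 2) := by
    simpa using hmean one_ne_zero
  convert hone.mul_of_irrational_div (hmean hν.ne_zero) (Int.fract_periodic ℝ)
    ((Int.fract_periodic ℝ).const_mul ν) (Eventually.of_forall fun x => norm_fract_le_one _)
    (by simpa using hν.inv) using 1
  norm_num

theorem hasMeanValue_sq_fract_sub_fract {ν : ℝ} (hν : Irrational ν) :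
    HasMeanValue (fun x => (Int.fract x - Int.fract (ν * x)) ^ 2) (1 / 6) := by
  have hsq : HasMeanValue (fun x : ℝ => Int.fract x ^ 2) (1 / 3) := by
    convert hasMeanValue_fract_mul_pow one_ne_zero 2 using 1 <;> norm_num
  have hsqν : HasMeanValue (fun x => Int.fract (ν * x) ^ 2) (1 / 3) := by
    convert hasMeanValue_fract_mul_pow hν.ne_zero 2 using 1; norm_num
  convert (hsq.add hsqν).add ((hasMeanValue_fract_mul_fract hν).const_smul (-2 : ℝ)) using 1
  · ext x
    rw [smul_eq_mul]
    ring
  · norm_num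

end Fract

/-- For irrational `ν`, `(1/a) ∫₀^a ({x} - {νx})² dx → 1/6` as `a → +∞`. -/
theorem average_sq_fract_diff_tendsto (ν : ℝ) (hν : Irrational ν) :
    Tendsto (fun a : ℝ =>
        (1 / a) * ∫ x in Set.Ioo (0 : ℝ) a, (Int.fract x - Int.fract (ν * x)) ^ 2)
      atTop (nhds (1 / 6)) := by
  refine (hasMeanValue_sq_fract_sub_fract hν).tendsto.congr' ?_
  filter_upwards [eventually_ge_atTop 0] with a ha
  rw [interval_average_eq, sub_zero, smul_eq_mul, inv_eq_one_div,
    intervalIntegral.integral_of_le ha, integral_Ioc_eq_integral_Ioo]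
end

section
/- Let ν be an irrational real number with ν > 1. Then (1/log a)·∫₀¹ ({a x} − {ν a x})²/x dx converges to 1/6 as a → +∞. -/
open MeasureTheory Real Filter

/-!
Substituting `s = a x` turns the integral into `∫₀^a h(s) / s ds` with `h(s) = ({s} - {νs})²`. If
`h` has mean value `c`, then an integration by parts gives `∫₀^a h(s) / s ds ~ c log a`, so it
suffices to show that `h` has mean value `1/6`.

In terms of the periodized Bernoulli polynomials,
`h(s) = B₂(s) + B₂(νs) - 2 B₁(s) B₁(νs) + 1/6`. The first two terms have bounded primitives, hence
mean value `0`. For the product, let `g(s) = B₂(νs) / (2ν)`, a continuous primitive of `B₁(νs)`.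
By the trapezoid rule `∫₀^N B₁ g'` is `∑_{n<N} (g(n) + g(n+1)) / 2 - ∫₀^N g`: the integral stays
bounded, and the sum is `o(N)` because `nν` is equidistributed modulo `1` (Weyl) and `B₂` has
integral `0` over a period.
-/

open Topology AddCircle Asymptotics

section Rotation

theorem isClosed_setOf_tendsto_birkhoffAverage_integral {X E : Type*} [TopologicalSpace X]
    [CompactSpace X] [MeasurableSpace X] [BorelSpace X] (μ : Measure X) [IsFiniteMeasure μ]
    [NormedAddCommGroup E] [NormedSpace ℝ E] [SecondCountableTopologyEither X E] (g : C(X, X))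
    (x : X) :
    IsClosed {f : C(X, E) |
      Tendsto (birkhoffAverage ℝ g f · x) atTop (𝓝 (∫ y, f y ∂μ))} := by
  have hcomp : LipschitzWith 1 fun f : C(X, E) ↦ f.comp g :=
    LipschitzWith.of_dist_le_mul fun f₁ f₂ ↦ by
      simpa using (ContinuousMap.dist_le dist_nonneg).2 fun y ↦ f₁.dist_apply_le_dist (g y)
  have heval : UniformContinuous fun f : C(X, E) ↦ f x :=
    (LipschitzWith.of_dist_le_mul (K := 1) fun f₁ f₂ ↦ by
      simpa using ContinuousMap.dist_apply_le_dist x).uniformContinuous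
  have hintegral : Continuous fun f : C(X, E) ↦ ∫ y, f y ∂μ := by
    refine (continuous_integral.comp (ContinuousMap.toLp 1 μ ℝ).continuous).congr fun f ↦ ?_
    exact integral_congr_ae (ContinuousMap.coeFn_toLp ..)
  have hiter (f : C(X, E)) (n : ℕ) : ((·.comp g)^[n] f) x = f (g^[n] x) := by
    induction n generalizing f with
    | zero => rfl
    | succ n ih => rw [Function.iterate_succ_apply, ih, Function.iterate_succ_apply']; rfl
  simpa only [birkhoffAverage, birkhoffSum, hiter] using
    isClosed_setOfPred_tendsto_birkhoffAverage ℝ hcomp heval hintegral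

theorem tendsto_average_pow_of_norm_eq_one {𝕜 : Type*} [NormedField 𝕜] [NormedSpace ℝ 𝕜]
    {z : 𝕜} (hz : ‖z‖ = 1) (hz1 : z ≠ 1) :
    Tendsto (fun N : ℕ ↦ (N : ℝ)⁻¹ • ∑ n ∈ Finset.range N, z ^ n) atTop (𝓝 0) := by
  refine squeeze_zero_norm (fun N ↦ ?_)
    (tendsto_const_div_atTop_nhds_zero_nat (2 / ‖z - 1‖))
  have hgeom : ‖∑ n ∈ Finset.range N, z ^ n‖ ≤ 2 / ‖z - 1‖ := by
    rw [geom_sum_eq hz1, norm_div]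
    gcongr
    calc ‖z ^ N - 1‖ ≤ ‖z ^ N‖ + ‖(1 : 𝕜)‖ := norm_sub_le _ _
      _ = 2 := by norm_num [hz]
  rw [norm_smul, norm_inv, norm_natCast, ← div_eq_inv_mul]
  gcongr

variable {T : ℝ} [Fact (0 < T)]

theorem fourier_apply_ne_one {a : AddCircle T} (ha : addOrderOf a = 0) {k : ℤ} (hk : k ≠ 0) :
    fourier k a ≠ 1 := by
  have hka : k • a ≠ 0 := fun h ↦ by
    rw [← addOrderOf_dvd_iff_zsmul_eq_zero, ha] at h
    exact hk (by simpa using h)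
  rw [fourier_apply, ← Circle.coe_one, Circle.coe_inj.ne, ← toCircle_zero (T := T)]
  exact (injective_toCircle (Fact.out : 0 < T).ne').ne hka

theorem integral_fourier (k : ℤ) :
    ∫ y : AddCircle T, fourier k y ∂haarAddCircle = if k = 0 then 1 else 0 := by
  simpa [fourierCoeff, Pi.single_apply, eq_comm] using congrFun (fourierCoeff_fourier (T := T) k) 0

theorem tendsto_birkhoffAverage_fourier {a : AddCircle T} (ha : addOrderOf a = 0) (k : ℤ)
    (x : AddCircle T) :
    Tendsto (birkhoffAverage ℝ (a + ·) (fourier k) · x) atTop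
      (𝓝 (∫ y, fourier (T := T) k y ∂haarAddCircle)) := by
  have hiter (n : ℕ) : fourier k ((a + ·)^[n] x) = fourier k a ^ n * fourier k x := by
    rw [add_left_iterate]
    simp only [fourier_apply, smul_add, toCircle_add, smul_comm k n a, toCircle_nsmul,
      Circle.coe_mul, Circle.coe_pow]
  have hsum (N : ℕ) : birkhoffAverage ℝ (a + ·) (fourier k) N x
      = ((N : ℝ)⁻¹ • ∑ n ∈ Finset.range N, fourier k a ^ n) * fourier k x := by
    simp only [birkhoffAverage, birkhoffSum, hiter, Finset.sum_mul, smul_mul_assoc]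
  simp only [hsum, integral_fourier]
  split_ifs with hk
  · subst hk
    refine tendsto_const_nhds.congr' ?_
    filter_upwards [eventually_ne_atTop 0] with N hN
    simp [hN]
  · simpa using (tendsto_average_pow_of_norm_eq_one (Circle.norm_coe _)
      (fourier_apply_ne_one ha hk)).mul_const (fourier k x)

theorem tendsto_birkhoffAverage_add_left {a : AddCircle T} (ha : addOrderOf a = 0)
    (f : C(AddCircle T, ℂ)) (x : AddCircle T) :
    Tendsto (birkhoffAverage ℝ (a + ·) f · x) atTop (𝓝 (∫ y, f y ∂haarAddCircle)) := by
  set S := {f : C(AddCircle T, ℂ) |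
    Tendsto (birkhoffAverage ℝ (a + ·) f · x) atTop (𝓝 (∫ y, f y ∂haarAddCircle))}
  have hclosed : IsClosed S := isClosed_setOf_tendsto_birkhoffAverage_integral _
    ⟨(a + ·), continuous_const_add a⟩ x
  have hspan : (Submodule.span ℂ (Set.range (fourier (T := T))) : Set C(AddCircle T, ℂ)) ⊆ S := by
    intro f hf
    induction hf using Submodule.span_induction with
    | mem f hf =>
      obtain ⟨k, rfl⟩ := hf
      exact tendsto_birkhoffAverage_fourier ha k x
    | zero => simp [S, birkhoffAverage, birkhoffSum]
    | add f g _ _ hf hg =>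
      have hintegrable (h : C(AddCircle T, ℂ)) : Integrable h haarAddCircle :=
        h.continuous.integrable_of_hasCompactSupport (HasCompactSupport.of_compactSpace h)
      simpa [S, birkhoffAverage, birkhoffSum, Finset.sum_add_distrib, mul_add,
        integral_add (hintegrable f) (hintegrable g)] using Tendsto.add hf hg
    | smul c f _ hf =>
      simpa [S, birkhoffAverage, birkhoffSum, ← Finset.mul_sum, mul_left_comm, integral_const_mul]
        using Tendsto.const_mul c hf
  have htop : (Submodule.span ℂ (Set.range (fourier (T := T)))).topologicalClosure = ⊤ :=
    span_fourier_closure_eq_top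
  exact closure_minimal hspan hclosed <|
    (htop ▸ Submodule.mem_top : f ∈ Submodule.topologicalClosure _)

end Rotation

section MeanValue

variable {f g : ℝ → ℝ} {c : ℝ}

theorem intervalIntegrable_of_locallyIntegrable (hf : LocallyIntegrable f) (a b : ℝ) :
    IntervalIntegrable f volume a b :=
  (hf.integrableOn_isCompact isCompact_uIcc).intervalIntegrable

/-- `f` has Cesàro mean value `c` along the positive half-line; this is what controls the growth of
`∫ f(s) / s ds`. It is meaningful only for locally integrable `f`, the integral being `0` on
intervals where `f` is not integrable. -/
def HasMeanValue_s18 (f : ℝ → ℝ) (c : ℝ) : Prop :=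
  Tendsto (fun T ↦ (∫ s in (0 : ℝ)..T, f s) / T) atTop (𝓝 c)

theorem hasMeanValue_const_s18 (c : ℝ) : HasMeanValue_s18 (fun _ ↦ c) c := by
  refine tendsto_const_nhds.congr' ?_
  filter_upwards [eventually_ne_atTop 0] with T hT
  simp [hT]

theorem HasMeanValue_s18.add {d : ℝ} (hf : HasMeanValue_s18 f c) (hg : HasMeanValue_s18 g d)
    (hfi : LocallyIntegrable f) (hgi : LocallyIntegrable g) :
    HasMeanValue_s18 (fun s ↦ f s + g s) (c + d) :=
  (Tendsto.add hf hg).congr fun T ↦ by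
    rw [intervalIntegral.integral_add (intervalIntegrable_of_locallyIntegrable hfi 0 T)
      (intervalIntegrable_of_locallyIntegrable hgi 0 T), add_div]

theorem HasMeanValue_s18.const_mul (r : ℝ) (hf : HasMeanValue_s18 f c) :
    HasMeanValue_s18 (fun s ↦ r * f s) (r * c) :=
  (Tendsto.const_mul r hf).congr fun T ↦ by
    rw [intervalIntegral.integral_const_mul, mul_div_assoc]

theorem hasMeanValue_zero_of_abs_integral_le {C : ℝ} (hC : ∀ T, |∫ s in (0 : ℝ)..T, f s| ≤ C) :
    HasMeanValue_s18 f 0 :=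
  squeeze_zero_norm' (by
    filter_upwards [eventually_gt_atTop 0] with T hT
    rw [norm_div, Real.norm_of_nonneg hT.le]
    gcongr
    exact hC T) (tendsto_const_nhds.div_atTop tendsto_id : Tendsto (fun T ↦ C / T) atTop (𝓝 0))

theorem hasMeanValue_of_tendsto_natCast (hf : LocallyIntegrable f) {C : ℝ}
    (hC : ∀ s, |f s| ≤ C)
    (hlim : Tendsto (fun N : ℕ ↦ (∫ s in (0 : ℝ)..N, f s) / N) atTop (𝓝 c)) :
    HasMeanValue_s18 f c := by
  have hfloor : Tendsto (fun T : ℝ ↦ (∫ s in (0 : ℝ)..⌊T⌋₊, f s) / T) atTop (𝓝 c) := by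
    have hmul := (hlim.comp tendsto_nat_floor_atTop).mul (tendsto_nat_floor_div_atTop (R := ℝ))
    rw [mul_one] at hmul
    refine hmul.congr' ?_
    filter_upwards [tendsto_nat_floor_atTop.eventually_ne_atTop 0] with T hT
    exact div_mul_div_cancel₀ (Nat.cast_ne_zero.2 hT)
  have htail : Tendsto (fun T : ℝ ↦ (∫ s in (⌊T⌋₊ : ℝ)..T, f s) / T) atTop (𝓝 0) := by
    refine squeeze_zero_norm' ?_
      (tendsto_const_nhds.div_atTop tendsto_id : Tendsto (fun T ↦ C / T) atTop (𝓝 0))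
    filter_upwards [eventually_gt_atTop 0] with T hT
    rw [norm_div, Real.norm_of_nonneg hT.le]
    gcongr
    calc ‖∫ s in (⌊T⌋₊ : ℝ)..T, f s‖ ≤ C * |T - ⌊T⌋₊| :=
          intervalIntegral.norm_integral_le_of_norm_le_const fun s _ ↦ hC s
      _ ≤ C * 1 := by
          have := Nat.floor_le hT.le
          have := Nat.lt_floor_add_one T
          exact mul_le_mul_of_nonneg_left (abs_le.2 ⟨by linarith, by linarith⟩)
            ((abs_nonneg _).trans (hC 0))
      _ = C := mul_one C
  have hsum := hfloor.add htail
  rw [add_zero] at hsum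
  refine hsum.congr fun T ↦ ?_
  rw [← add_div, intervalIntegral.integral_add_adjacent_intervals] <;>
    exact intervalIntegrable_of_locallyIntegrable hf _ _

theorem isLittleO_integral_of_tendsto_atTop {E : Type*} [NormedAddCommGroup E] [NormedSpace ℝ E]
    {f : ℝ → E} {g : ℝ → ℝ} {a : ℝ} (hfg : f =o[atTop] g) (hg : ∀ x, a ≤ x → 0 ≤ g x)
    (hfi : ∀ b, a ≤ b → IntervalIntegrable f volume a b)
    (hgi : ∀ b, a ≤ b → IntervalIntegrable g volume a b)
    (htop : Tendsto (fun b ↦ ∫ x in a..b, g x) atTop atTop) :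
    (fun b ↦ ∫ x in a..b, f x) =o[atTop] fun b ↦ ∫ x in a..b, g x := by
  refine isLittleO_iff.2 fun ε hε ↦ ?_
  obtain ⟨R, haR, hR⟩ : ∃ R ≥ a, ∀ x ≥ R, ‖f x‖ ≤ ε / 2 * ‖g x‖ := by
    obtain ⟨R, hR⟩ := eventually_atTop.1 (isLittleO_iff.1 hfg (half_pos hε))
    exact ⟨max a R, le_max_left a R, fun x hx ↦ hR x ((le_max_right a R).trans hx)⟩
  filter_upwards [eventually_ge_atTop R, (htop.const_mul_atTop (half_pos hε)).eventually_ge_atTop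
    ‖∫ x in a..R, f x‖] with b hRb hb
  have hgRb : IntervalIntegrable g volume R b :=
    (hgi R haR).symm.trans (hgi b (haR.trans hRb))
  have htail : ‖∫ x in R..b, f x‖ ≤ ε / 2 * ∫ x in R..b, g x := by
    rw [← intervalIntegral.integral_const_mul]
    refine intervalIntegral.norm_integral_le_of_norm_le hRb (.of_forall fun x hx ↦ ?_)
      (hgRb.const_mul _)
    simpa [abs_of_nonneg (hg x (haR.trans hx.1.le))] using hR x hx.1.le
  have hhead : 0 ≤ ∫ x in a..R, g x :=
    intervalIntegral.integral_nonneg haR fun x hx ↦ hg x hx.1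
  have hsplit := intervalIntegral.integral_add_adjacent_intervals (hgi R haR) hgRb
  have hab : 0 ≤ ∫ x in a..b, g x :=
    intervalIntegral.integral_nonneg (haR.trans hRb) fun x hx ↦ hg x hx.1
  calc ‖∫ x in a..b, f x‖
      = ‖(∫ x in a..R, f x) + ∫ x in R..b, f x‖ := by
        rw [intervalIntegral.integral_add_adjacent_intervals (hfi R haR)
          ((hfi R haR).symm.trans (hfi b (haR.trans hRb)))]
    _ ≤ ε / 2 * (∫ x in a..b, g x) + ε / 2 * ∫ x in R..b, g x :=
        (norm_add_le _ _).trans (add_le_add hb htail)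
    _ ≤ ε * ‖∫ x in a..b, g x‖ := by
        rw [Real.norm_of_nonneg hab]
        nlinarith

theorem integral_div_eq_integral_integral_div_sq (hf : LocallyIntegrable f) {T : ℝ} (hT : 1 ≤ T) :
    ∫ s in 1..T, f s / s
      = (∫ s in 0..T, f s) / T - (∫ s in 0..1, f s)
        + ∫ s in 1..T, (∫ t in 0..s, f t) / s ^ 2 := by
  have hne : ∀ s ∈ Set.uIcc 1 T, s ≠ 0 := fun s hs ↦
    (zero_lt_one.trans_le (Set.uIcc_of_le hT ▸ hs).1).ne'
  have hinv : AbsolutelyContinuousOnInterval (fun s : ℝ ↦ s⁻¹) 1 T :=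
    (contDiffOn_id.inv hne).absolutelyContinuousOnInterval
  have hF : AbsolutelyContinuousOnInterval (fun s ↦ ∫ t in 0..s, f t) 1 T :=
    ((intervalIntegrable_of_locallyIntegrable hf 0 T
      ).absolutelyContinuousOnInterval_intervalIntegral Set.left_mem_uIcc).mono
      (Set.uIcc_subset_uIcc_right (by simp [Set.mem_uIcc, hT]))
  have hparts := hinv.integral_mul_deriv_eq_deriv_mul hF
  have hleft : ∫ s in 1..T, s⁻¹ * deriv (fun s ↦ ∫ t in 0..s, f t) s = ∫ s in 1..T, f s / s :=
    intervalIntegral.integral_congr_ae <| by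
      filter_upwards [LocallyIntegrable.ae_hasDerivAt_integral hf] with s hs _
      rw [(hs 0).deriv, inv_mul_eq_div]
  have hright : ∫ s in 1..T, deriv (fun s : ℝ ↦ s⁻¹) s * ∫ t in 0..s, f t
      = -∫ s in 1..T, (∫ t in 0..s, f t) / s ^ 2 := by
    rw [← intervalIntegral.integral_neg]
    refine intervalIntegral.integral_congr fun s _ ↦ ?_
    simp only [deriv_inv]
    ring
  rw [← hleft, hparts, hright]
  ring

theorem integral_integral_div_sq_sub_isLittleO_log (hf : LocallyIntegrable f)
    (hmean : HasMeanValue_s18 f c) :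
    (fun T ↦ (∫ s in 1..T, (∫ t in 0..s, f t) / s ^ 2) - c * log T) =o[atTop] log := by
  have hpos {T s : ℝ} (hT : 1 ≤ T) (hs : s ∈ Set.uIcc 1 T) : 0 < s :=
    zero_lt_one.trans_le (Set.uIcc_of_le hT ▸ hs).1
  have hinv (T : ℝ) (hT : 1 ≤ T) : IntervalIntegrable (fun s : ℝ ↦ s⁻¹) volume 1 T :=
    (continuousOn_id.inv₀ fun s hs ↦ (hpos hT hs).ne').intervalIntegrable
  have hdiv (T : ℝ) (hT : 1 ≤ T) :
      IntervalIntegrable (fun s : ℝ ↦ (∫ t in 0..s, f t) / s ^ 2) volume 1 T :=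
    ((intervalIntegral.continuous_primitive (intervalIntegrable_of_locallyIntegrable hf) 0
      ).continuousOn.div (continuousOn_id.pow 2)
      fun s hs ↦ (pow_pos (hpos hT hs) 2).ne').intervalIntegrable
  have hlog : (fun T : ℝ ↦ ∫ s in 1..T, s⁻¹) =ᶠ[atTop] log := by
    filter_upwards [eventually_gt_atTop 0] with T hT
    rw [integral_inv_of_pos one_pos hT, div_one]
  have hlittle : (fun s ↦ (∫ t in 0..s, f t) / s ^ 2 - c * s⁻¹) =o[atTop] fun s : ℝ ↦ s⁻¹ := by
    have h := ((isLittleO_one_iff ℝ).2 (tendsto_sub_nhds_zero_iff.2 hmean)).mul_isBigO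
      (isBigO_refl (fun s : ℝ ↦ s⁻¹) atTop)
    refine h.congr (fun s ↦ ?_) fun s ↦ one_mul _
    ring
  have hintegral := isLittleO_integral_of_tendsto_atTop hlittle
    (fun s hs ↦ inv_nonneg.2 (zero_le_one.trans hs))
    (fun T hT ↦ (hdiv T hT).sub ((hinv T hT).const_mul c)) hinv
    (tendsto_log_atTop.congr' hlog.symm)
  refine hintegral.congr' ?_ hlog
  filter_upwards [eventually_ge_atTop 1, hlog] with T hT hlogT
  rw [intervalIntegral.integral_sub (hdiv T hT) ((hinv T hT).const_mul c),
    intervalIntegral.integral_const_mul, hlogT]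

theorem HasMeanValue_s18.tendsto_integral_div_div_log (hmean : HasMeanValue_s18 f c)
    (hf : LocallyIntegrable f) (h0 : IntervalIntegrable (fun s ↦ f s / s) volume 0 1) :
    Tendsto (fun T ↦ (∫ s in 0..T, f s / s) / log T) atTop (𝓝 c) := by
  have hbdd : Tendsto (fun T ↦ ((∫ s in 0..1, f s / s) + (∫ s in 0..T, f s) / T
      - ∫ s in 0..1, f s) / log T) atTop (𝓝 0) :=
    ((hmean.const_add _).sub_const _).div_atTop tendsto_log_atTop
  have hlittle := (integral_integral_div_sq_sub_isLittleO_log hf hmean).tendsto_div_nhds_zero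
  have hsum := (hbdd.add hlittle).add_const c
  rw [zero_add, zero_add] at hsum
  refine hsum.congr' ?_
  filter_upwards [eventually_gt_atTop 1] with T hT
  have hne : ∀ s ∈ Set.uIcc 1 T, s ≠ 0 := fun s hs ↦
    (zero_lt_one.trans_le (Set.uIcc_of_le hT.le ▸ hs).1).ne'
  have h1 : IntervalIntegrable (fun s ↦ f s / s) volume 1 T :=
    (intervalIntegrable_of_locallyIntegrable hf 1 T).mul_continuousOn (continuousOn_inv₀.mono hne)
  rw [← intervalIntegral.integral_add_adjacent_intervals h0 h1,
    integral_div_eq_integral_integral_div_sq hf hT.le]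
  field_simp [(log_pos hT).ne']
  ring

theorem integral_Ioc_comp_mul_left_div (f : ℝ → ℝ) {a : ℝ} (ha : 0 < a) :
    ∫ x in Set.Ioc 0 1, f (a * x) / x = ∫ s in 0..a, f s / s := by
  have hscale := intervalIntegral.mul_integral_comp_mul_left (f := fun s ↦ f s / s) (a := 0)
    (b := 1) a
  rw [mul_zero, mul_one, ← intervalIntegral.integral_const_mul] at hscale
  rw [← hscale, ← intervalIntegral.integral_of_le zero_le_one]
  congr! 2
  rw [mul_div_assoc', mul_div_mul_left _ _ ha.ne']

end MeanValue

section PeriodizedBernoulli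

theorem addOrderOf_coe_eq_zero_of_irrational {ν : ℝ} (hν : Irrational ν) :
    addOrderOf (ν : UnitAddCircle) = 0 := by
  rw [addOrderOf_eq_zero_iff, isOfFinAddOrder_iff_nsmul_eq_zero]
  rintro ⟨n, hn, h⟩
  rw [← AddCircle.coe_nsmul, AddCircle.coe_eq_zero_iff] at h
  obtain ⟨m, hm⟩ := h
  exact (hν.natCast_mul hn.ne').ne_int m (by simpa using hm.symm)

theorem integral_periodizedBernoulli {k : ℕ} (hk : k ≠ 0) :
    ∫ y, periodizedBernoulli k y ∂haarAddCircle = 0 := by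
  have hcoeff := fourierCoeff_bernoulli_eq hk 0
  simp only [fourierCoeff, neg_zero, fourier_zero, one_smul, Function.comp_apply,
    integral_complex_ofReal, Int.cast_zero, mul_zero, zero_pow hk, div_zero] at hcoeff
  exact_mod_cast hcoeff

theorem tendsto_sum_periodizedBernoulli_div {k : ℕ} (hk0 : k ≠ 0) (hk1 : k ≠ 1)
    {a : UnitAddCircle} (ha : addOrderOf a = 0) (x : UnitAddCircle) :
    Tendsto (fun N : ℕ ↦ (∑ n ∈ Finset.range N, periodizedBernoulli k (n • a + x)) / N) atTop
      (𝓝 0) := by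
  have h := tendsto_birkhoffAverage_add_left ha ⟨fun y ↦ (periodizedBernoulli k y : ℂ),
    Complex.continuous_ofReal.comp (periodizedBernoulli.continuous hk1)⟩ x
  simp only [ContinuousMap.coe_mk, integral_complex_ofReal, integral_periodizedBernoulli hk0] at h
  refine ((Complex.continuous_re.tendsto _).comp h).congr fun N ↦ ?_
  simp only [birkhoffAverage, birkhoffSum, add_left_iterate, Function.comp_apply,
    Complex.smul_re, Complex.re_sum, Complex.ofReal_re, smul_eq_mul, div_eq_inv_mul]

theorem hasDerivWithinAt_fract (x : ℝ) : HasDerivWithinAt Int.fract 1 (Set.Ioi x) x := by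
  have hderiv : HasDerivWithinAt (fun y : ℝ ↦ y - ⌊x⌋) 1 (Set.Ioi x) x :=
    (hasDerivWithinAt_id x _).sub_const _
  refine hderiv.congr_of_eventuallyEq ?_ rfl
  filter_upwards [Ioo_mem_nhdsGT (Int.lt_floor_add_one x)] with y hy
  rw [← Int.self_sub_floor, Int.floor_eq_iff.2 ⟨(Int.floor_le x).trans hy.1.le, hy.2⟩]

theorem periodizedBernoulli_coe (k : ℕ) (x : ℝ) :
    periodizedBernoulli k (x : UnitAddCircle) = bernoulliFun k (Int.fract x) := by
  rw [← AddCircle.coe_fract x, periodizedBernoulli, AddCircle.liftIco_coe_apply]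
  rw [zero_add]; exact ⟨Int.fract_nonneg x, Int.fract_lt_one x⟩

theorem measurable_periodizedBernoulli (k : ℕ) : Measurable (periodizedBernoulli k) :=
  (continuous_bernoulliFun k).measurable.comp
    (measurable_subtype_coe.comp (AddCircle.measurableEquivIco 1 0).measurable)

theorem exists_abs_periodizedBernoulli_le (k : ℕ) :
    ∃ C, ∀ y, |periodizedBernoulli k y| ≤ C := by
  obtain ⟨C, hC⟩ := isCompact_Icc.exists_bound_of_continuousOn
    (continuous_bernoulliFun k).continuousOn
  refine ⟨C, fun y ↦ ?_⟩
  induction y using QuotientAddGroup.induction_on with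
  | H x =>
    rw [periodizedBernoulli_coe]
    exact hC _ ⟨Int.fract_nonneg x, (Int.fract_lt_one x).le⟩

theorem hasDerivWithinAt_periodizedBernoulli (k : ℕ) (x : ℝ) :
    HasDerivWithinAt (fun s : ℝ ↦ periodizedBernoulli (k + 1) s)
      ((k + 1) * periodizedBernoulli k x) (Set.Ioi x) x := by
  simp only [periodizedBernoulli_coe]
  simpa [Function.comp_def] using
    (hasDerivAt_bernoulliFun (k + 1) (Int.fract x)).comp_hasDerivWithinAt x
      (hasDerivWithinAt_fract x)

theorem locallyIntegrable_periodizedBernoulli_const_mul (k : ℕ) (ν : ℝ) :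
    LocallyIntegrable fun s : ℝ ↦ periodizedBernoulli k (ν * s : ℝ) := by
  obtain ⟨C, hC⟩ := exists_abs_periodizedBernoulli_le k
  have hmeas : Measurable fun s : ℝ ↦ periodizedBernoulli k (ν * s : ℝ) :=
    (measurable_periodizedBernoulli k).comp (AddCircle.measurable_mk'.comp (measurable_const_mul ν))
  exact (memLp_top_of_bound hmeas.aestronglyMeasurable C (.of_forall fun s ↦ hC _)
    ).locallyIntegrable le_top

theorem locallyIntegrable_periodizedBernoulli_mul (k : ℕ) {f : ℝ → ℝ} (hf : LocallyIntegrable f) :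
    LocallyIntegrable fun s : ℝ ↦ periodizedBernoulli k (s : ℝ) * f s := by
  obtain ⟨C, hC⟩ := exists_abs_periodizedBernoulli_le k
  exact locallyIntegrable_iff.2 fun K hK ↦ (hf.integrableOn_isCompact hK).bdd_mul
    ((measurable_periodizedBernoulli k).comp AddCircle.measurable_mk').aestronglyMeasurable
    (.of_forall fun s ↦ hC s)

theorem continuous_periodizedBernoulli_const_mul_div {k : ℕ} (hk : k ≠ 0) (ν : ℝ) :
    Continuous fun s : ℝ ↦ periodizedBernoulli (k + 1) (ν * s : ℝ) / (ν * (k + 1)) :=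
  ((periodizedBernoulli.continuous (by simpa using hk)).comp
    ((AddCircle.continuous_mk' 1).comp (continuous_const_mul ν))).div_const _

theorem hasDerivWithinAt_periodizedBernoulli_const_mul_div (k : ℕ) {ν : ℝ} (hν : 0 < ν) (x : ℝ) :
    HasDerivWithinAt (fun s : ℝ ↦ periodizedBernoulli (k + 1) (ν * s : ℝ) / (ν * (k + 1)))
      (periodizedBernoulli k (ν * x : ℝ)) (Set.Ioi x) x := by
  have hscale : HasDerivWithinAt (fun s : ℝ ↦ ν * s) ν (Set.Ioi x) x := by
    simpa using (hasDerivWithinAt_id x _).const_mul ν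
  have hmaps : Set.MapsTo (fun s : ℝ ↦ ν * s) (Set.Ioi x) (Set.Ioi (ν * x)) :=
    fun s hs ↦ mul_lt_mul_of_pos_left hs hν
  refine (((hasDerivWithinAt_periodizedBernoulli k (ν * x)).comp x hscale hmaps).div_const
    (ν * (k + 1))).congr_deriv ?_
  field_simp

theorem integral_periodizedBernoulli_const_mul {k : ℕ} (hk : k ≠ 0) {ν : ℝ} (hν : 0 < ν) (a b : ℝ) :
    ∫ s in a..b, periodizedBernoulli k (ν * s : ℝ)
      = periodizedBernoulli (k + 1) (ν * b : ℝ) / (ν * (k + 1))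
        - periodizedBernoulli (k + 1) (ν * a : ℝ) / (ν * (k + 1)) :=
  intervalIntegral.integral_eq_sub_of_hasDeriv_right
    (continuous_periodizedBernoulli_const_mul_div hk ν).continuousOn
    (fun x _ ↦ hasDerivWithinAt_periodizedBernoulli_const_mul_div k hν x)
    (intervalIntegrable_of_locallyIntegrable
      (locallyIntegrable_periodizedBernoulli_const_mul k ν) a b)

theorem integral_unit_periodizedBernoulli_one_mul_deriv {g g' : ℝ → ℝ} (n : ℤ)
    (hg : Continuous g) (hderiv : ∀ x, HasDerivWithinAt g (g' x) (Set.Ioi x) x)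
    (hg' : LocallyIntegrable g') :
    ∫ s in (n : ℝ)..n + 1, periodizedBernoulli 1 (s : ℝ) * g' s
      = (g n + g (n + 1)) / 2 - ∫ s in (n : ℝ)..n + 1, g s := by
  have hB : ∫ s in (n : ℝ)..n + 1, periodizedBernoulli 1 (s : ℝ) * g' s
      = ∫ s in (n : ℝ)..n + 1, (s - n - 1 / 2) * g' s := by
    rw [intervalIntegral.integral_of_le (by simp), intervalIntegral.integral_of_le (by simp),
      ← integral_Ico_eq_integral_Ioc, ← integral_Ico_eq_integral_Ioc]
    refine setIntegral_congr_fun measurableSet_Ico fun s hs ↦ ?_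
    simp only [periodizedBernoulli_coe, bernoulliFun_one, ← Int.self_sub_floor,
      Int.floor_eq_iff.2 hs]
  rw [hB, intervalIntegral.integral_mul_deriv_eq_deriv_mul_of_hasDeriv_right
    (u := fun s ↦ s - n - 1 / 2) (u' := 1) (by fun_prop) hg.continuousOn
    (fun x _ ↦ ((hasDerivWithinAt_id x _).sub_const _).sub_const _) (fun x _ ↦ hderiv x)
    intervalIntegrable_const (intervalIntegrable_of_locallyIntegrable hg' _ _)]
  simp only [add_sub_cancel_left, sub_self, zero_sub, Pi.one_apply, one_mul]
  ring

theorem integral_periodizedBernoulli_one_mul_deriv {g g' : ℝ → ℝ} (N : ℕ)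
    (hg : Continuous g) (hderiv : ∀ x, HasDerivWithinAt g (g' x) (Set.Ioi x) x)
    (hg' : LocallyIntegrable g') :
    ∫ s in (0 : ℝ)..N, periodizedBernoulli 1 (s : ℝ) * g' s
      = ∑ n ∈ Finset.range N, (g n + g (n + 1 : ℕ)) / 2 - ∫ s in (0 : ℝ)..N, g s := by
  simp only [← Nat.cast_zero (R := ℝ)]
  rw [← intervalIntegral.sum_integral_adjacent_intervals (f := g)
      fun n _ ↦ hg.intervalIntegrable _ _,
    ← intervalIntegral.sum_integral_adjacent_intervals
      fun n _ ↦ intervalIntegrable_of_locallyIntegrable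
        (locallyIntegrable_periodizedBernoulli_mul 1 hg') _ _,
    ← Finset.sum_sub_distrib]
  exact Finset.sum_congr rfl fun n _ ↦ by
    exact_mod_cast integral_unit_periodizedBernoulli_one_mul_deriv n hg hderiv hg'

theorem hasMeanValue_periodizedBernoulli_const_mul {k : ℕ} (hk : k ≠ 0) {ν : ℝ} (hν : 0 < ν) :
    HasMeanValue_s18 (fun s ↦ periodizedBernoulli k (ν * s : ℝ)) 0 := by
  obtain ⟨C, hC⟩ := exists_abs_periodizedBernoulli_le (k + 1)
  refine hasMeanValue_zero_of_abs_integral_le (C := (C + C) / (ν * (k + 1))) fun T ↦ ?_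
  rw [integral_periodizedBernoulli_const_mul hk hν, ← sub_div, abs_div,
    abs_of_pos (by positivity : 0 < ν * (k + 1))]
  gcongr
  exact (abs_sub _ _).trans (add_le_add (hC _) (hC _))

theorem hasMeanValue_periodizedBernoulli_one_mul {k : ℕ} (hk : k ≠ 0) {ν : ℝ} (hν : 0 < ν)
    (hirr : Irrational ν) :
    HasMeanValue_s18 (fun s ↦ periodizedBernoulli 1 (s : ℝ) * periodizedBernoulli k (ν * s : ℝ)) 0 := by
  have hBk := locallyIntegrable_periodizedBernoulli_const_mul k ν
  obtain ⟨C₁, hC₁⟩ := exists_abs_periodizedBernoulli_le 1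
  obtain ⟨C₂, hC₂⟩ := exists_abs_periodizedBernoulli_le k
  refine hasMeanValue_of_tendsto_natCast (locallyIntegrable_periodizedBernoulli_mul 1 hBk)
    (C := C₁ * C₂) (fun s ↦ (abs_mul _ _).trans_le
      (mul_le_mul (hC₁ _) (hC₂ _) (abs_nonneg _) ((abs_nonneg _).trans (hC₁ 0)))) ?_
  have hcoe (n : ℕ) : ((ν * n : ℝ) : UnitAddCircle) = n • (ν : UnitAddCircle) := by
    rw [← AddCircle.coe_nsmul, nsmul_eq_mul, mul_comm]
  have hsum (x : UnitAddCircle) := tendsto_sum_periodizedBernoulli_div (k := k + 1) (by simp)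
    (by simpa using hk) (addOrderOf_coe_eq_zero_of_irrational hirr) x
  have hmean := (hasMeanValue_periodizedBernoulli_const_mul k.succ_ne_zero hν).comp
    tendsto_natCast_atTop_atTop
  have hlim := ((((hsum 0).add (hsum ν)).div_const 2).sub hmean).div_const (ν * (k + 1))
  simp only [add_zero, zero_div, sub_zero] at hlim
  refine hlim.congr fun N ↦ ?_
  rw [integral_periodizedBernoulli_one_mul_deriv N
    (continuous_periodizedBernoulli_const_mul_div hk ν)
    (hasDerivWithinAt_periodizedBernoulli_const_mul_div k hν) hBk,
    intervalIntegral.integral_div, ← Finset.sum_div, Finset.sum_add_distrib, ← Finset.sum_div,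
    ← Finset.sum_div]
  simp only [hcoe, succ_nsmul, Function.comp_apply, Nat.succ_eq_add_one]
  ring

theorem sq_fract_sub_fract (s t : ℝ) :
    (Int.fract s - Int.fract t) ^ 2
      = periodizedBernoulli 2 s + periodizedBernoulli 2 t
        + -2 * (periodizedBernoulli 1 s * periodizedBernoulli 1 t) + 1 / 6 := by
  simp only [periodizedBernoulli_coe, bernoulliFun_one, bernoulliFun_two]
  ring

end PeriodizedBernoulli

section FractDiff

variable {ν : ℝ}

theorem hasMeanValue_sq_fract_sub_fract_const_mul (hν : 0 < ν) (hirr : Irrational ν) :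
    HasMeanValue_s18 (fun s ↦ (Int.fract s - Int.fract (ν * s)) ^ 2) (1 / 6) := by
  have hB₂ (ν : ℝ) := locallyIntegrable_periodizedBernoulli_const_mul 2 ν
  have hB₁B₁ := (locallyIntegrable_periodizedBernoulli_mul 1
    (locallyIntegrable_periodizedBernoulli_const_mul 1 ν)).smul (-2 : ℝ)
  have hsquares := (hasMeanValue_periodizedBernoulli_const_mul two_ne_zero one_pos).add
    (hasMeanValue_periodizedBernoulli_const_mul two_ne_zero hν) (hB₂ 1) (hB₂ ν)
  have hproduct := (hasMeanValue_periodizedBernoulli_one_mul one_ne_zero hν hirr).const_mul (-2)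
  have hsum := (hsquares.add hproduct ((hB₂ 1).add (hB₂ ν)) hB₁B₁).add (hasMeanValue_const_s18 (1 / 6))
    (((hB₂ 1).add (hB₂ ν)).add hB₁B₁) (locallyIntegrable_const _)
  simpa only [sq_fract_sub_fract, one_mul, mul_zero, zero_add] using hsum

theorem abs_fract_sub_fract_lt_one (s t : ℝ) : |Int.fract s - Int.fract t| < 1 :=
  abs_sub_lt_of_nonneg_of_lt (Int.fract_nonneg s) (Int.fract_lt_one s) (Int.fract_nonneg t)
    (Int.fract_lt_one t)

theorem locallyIntegrable_sq_fract_sub_fract_const_mul (ν : ℝ) :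
    LocallyIntegrable fun s : ℝ ↦ (Int.fract s - Int.fract (ν * s)) ^ 2 := by
  have hmeas : Measurable fun s : ℝ ↦ (Int.fract s - Int.fract (ν * s)) ^ 2 := by fun_prop
  refine (memLp_top_of_bound hmeas.aestronglyMeasurable 1 (.of_forall fun s ↦ ?_)
    ).locallyIntegrable le_top
  rw [Real.norm_of_nonneg (sq_nonneg _)]
  exact (sq_le_one_iff_abs_le_one _).2 (abs_fract_sub_fract_lt_one _ _).le

theorem intervalIntegrable_sq_fract_sub_fract_const_mul_div (hν : 0 ≤ ν) :
    IntervalIntegrable (fun s ↦ (Int.fract s - Int.fract (ν * s)) ^ 2 / s) volume 0 1 := by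
  have hmeas : Measurable fun s : ℝ ↦ (Int.fract s - Int.fract (ν * s)) ^ 2 / s := by fun_prop
  rw [intervalIntegrable_iff_integrableOn_Ioc_of_le zero_le_one]
  refine Measure.integrableOn_of_bounded (M := 1 + ν) (by simp) hmeas.aestronglyMeasurable ?_
  filter_upwards [ae_restrict_mem measurableSet_Ioc] with s hs
  have hfract {t : ℝ} (ht : 0 ≤ t) : Int.fract t ≤ t :=
    sub_le_self t (Int.cast_nonneg (Int.floor_nonneg.2 ht))
  have hsmall : |Int.fract s - Int.fract (ν * s)| ≤ (1 + ν) * s := by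
    have := Int.fract_nonneg s
    have := Int.fract_nonneg (ν * s)
    have := hfract hs.1.le
    have := hfract (mul_nonneg hν hs.1.le)
    exact abs_le.2 ⟨by linarith, by linarith [mul_nonneg hν hs.1.le]⟩
  rw [Real.norm_of_nonneg (by have := hs.1; positivity), div_le_iff₀ hs.1, ← sq_abs]
  nlinarith [abs_fract_sub_fract_lt_one s (ν * s), abs_nonneg (Int.fract s - Int.fract (ν * s))]

end FractDiff

theorem log_average_sq_fract_diff_tendsto_general (ν : ℝ) (hν : 0 < ν) (hirr : Irrational ν) :
    Tendsto (fun a : ℝ =>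
        (1 / Real.log a) *
          ∫ x in Set.Ioc (0 : ℝ) 1, (Int.fract (a * x) - Int.fract (ν * a * x)) ^ 2 / x)
      atTop (nhds (1 / 6)) := by
  have hlim := (hasMeanValue_sq_fract_sub_fract_const_mul hν hirr).tendsto_integral_div_div_log
    (locallyIntegrable_sq_fract_sub_fract_const_mul ν)
    (intervalIntegrable_sq_fract_sub_fract_const_mul_div hν.le)
  refine hlim.congr' ?_
  filter_upwards [eventually_gt_atTop 0] with a ha
  rw [← integral_Ioc_comp_mul_left_div _ ha, one_div, inv_mul_eq_div]
  simp only [mul_assoc]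

/-- For irrational `ν > 1`, `(1/log a) ∫₀¹ ({ax} - {νax})²/x dx → 1/6` as `a → +∞`. -/
theorem log_average_sq_fract_diff_tendsto (ν : ℝ) (hν : 1 < ν) (hirr : Irrational ν) :
    Tendsto (fun a : ℝ =>
        (1 / Real.log a) *
          ∫ x in Set.Ioc (0 : ℝ) 1, (Int.fract (a * x) - Int.fract (ν * a * x)) ^ 2 / x)
      atTop (nhds (1 / 6)) :=
  log_average_sq_fract_diff_tendsto_general ν (zero_lt_one.trans hν) hirr
end
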